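/- arXiv:2206.10217 — 2 statements merged into one kernel-verified Lean document; each statement's English description precedes it below -/
import Mathlib

section
/- In the pure p-spin spherical model with p ≥ 3, for every fixed integer k ≥ 0 and every ε > 0 there exists a constant cₖ > 0 such that for all sufficiently large N, P( there exists a spherical critical point σ of H_N with index equal to N−1−k and H_N(σ) ≤ N (THR − ε) ) ≤ exp(−cₖ N), where THR = 2√((p−1)/p). -/
open MeasureTheory ProbabilityTheory Filter
open scoped ENNReal NNReal

noncomputable section

/-- Euclidean dot product on `ℝ^N`. -/
def dotp {N : ℕ} (σ τ : Fin N → ℝ) : ℝ := ∑ i, σ i * τ i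

/-- The sphere `S_N = {σ : ‖σ‖₂² = N}`. -/
def sphereSet (N : ℕ) : Set (Fin N → ℝ) := {σ | ∑ i, (σ i) ^ 2 = (N : ℝ)}

/-- The mixture `ξ(x) = Σ_{k=2}^P c_k² x^k`. -/
def xiFun (P : ℕ) (c : ℕ → ℝ) (x : ℝ) : ℝ := ∑ k ∈ Finset.Icc 2 P, (c k) ^ 2 * x ^ k

/-- `ξ'`. -/
def xiD1 (P : ℕ) (c : ℕ → ℝ) (x : ℝ) : ℝ :=
  ∑ k ∈ Finset.Icc 2 P, (k : ℝ) * (c k) ^ 2 * x ^ (k - 1)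

/-- `ξ''`. -/
def xiD2 (P : ℕ) (c : ℕ → ℝ) (x : ℝ) : ℝ :=
  ∑ k ∈ Finset.Icc 2 P, (k : ℝ) * ((k : ℝ) - 1) * (c k) ^ 2 * x ^ (k - 2)

/-- The mixed p-spin Hamiltonian built from couplings `g`. -/
def hamiltonian (N P : ℕ) (c : ℕ → ℝ) (g : (k : ℕ) → (Fin k → Fin N) → ℝ)
    (σ : Fin N → ℝ) : ℝ :=
  ∑ k ∈ Finset.Icc 2 P, c k * (N : ℝ) ^ (-(((k : ℝ) - 1) / 2)) *
    ∑ j : Fin k → Fin N, g k j * ∏ i, σ (j i)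

/-- Index set for the entries of all the coupling tensors. -/
abbrev GIdx (N P : ℕ) : Type := Σ k : {k : ℕ // k ∈ Finset.Icc 2 P}, (Fin (k : ℕ) → Fin N)

/-- Flatten the couplings into a single Gaussian vector. -/
def flatten (N P : ℕ) (g : (k : ℕ) → (Fin k → Fin N) → ℝ) : GIdx N P → ℝ :=
  fun i => g i.1 i.2

/-- The couplings `(G^{(k)})_{2 ≤ k ≤ P}` are i.i.d. standard Gaussians. -/
def StdGaussianCouplings {Ω : Type*} [MeasureSpace Ω] (N P : ℕ)
    (G : Ω → (k : ℕ) → (Fin k → Fin N) → ℝ) : Prop :=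
  Measure.map (fun ω => flatten N P (G ω)) ℙ = Measure.pi fun _ : GIdx N P => gaussianReal 0 1

/-- The maximum of the Hamiltonian over the sphere. -/
def maxH (N P : ℕ) (c : ℕ → ℝ) (g : (k : ℕ) → (Fin k → Fin N) → ℝ) : ℝ :=
  ⨆ σ : sphereSet N, hamiltonian N P c g σ.1


/-- Euclidean gradient of the Hamiltonian. -/
def gradH (N P : ℕ) (c : ℕ → ℝ) (g : (k : ℕ) → (Fin k → Fin N) → ℝ)
    (σ : Fin N → ℝ) : Fin N → ℝ :=
  fun i => fderiv ℝ (hamiltonian N P c g) σ (Pi.single i 1)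

/-- Euclidean Hessian of the Hamiltonian, as a bilinear form. -/
def hessH (N P : ℕ) (c : ℕ → ℝ) (g : (k : ℕ) → (Fin k → Fin N) → ℝ)
    (σ v w : Fin N → ℝ) : ℝ :=
  fderiv ℝ (fun τ => fderiv ℝ (hamiltonian N P c g) τ w) σ v

/-- `σ` is a spherical critical point: `∇H(σ) = (⟨∇H(σ),σ⟩/N) σ`. -/
def IsCritPt (N P : ℕ) (c : ℕ → ℝ) (g : (k : ℕ) → (Fin k → Fin N) → ℝ)
    (σ : Fin N → ℝ) : Prop :=
  σ ∈ sphereSet N ∧ gradH N P c g σ = (dotp (gradH N P c g σ) σ / N) • σ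

/-- Cardinality of a set, valued in `ℝ≥0∞`. -/
def ecount {α : Type*} (s : Set α) : ℝ≥0∞ := ∑' _ : s, 1

/-- Spherical critical points with energy at least `Nη`. -/
def crtSet (N P : ℕ) (c : ℕ → ℝ) (g : (k : ℕ) → (Fin k → Fin N) → ℝ)
    (η : ℝ) : Set (Fin N → ℝ) :=
  {σ | IsCritPt N P c g σ ∧ (N : ℝ) * η ≤ hamiltonian N P c g σ}

/-- Index (number of negative eigenvalues) of the spherical Hessian quadratic form at `σ`:
maximal dimension of a subspace of the tangent space on which the form is negative definite. -/
def critIndex (N P : ℕ) (c : ℕ → ℝ) (g : (k : ℕ) → (Fin k → Fin N) → ℝ)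
    (σ : Fin N → ℝ) : ℕ :=
  sSup {d : ℕ | ∃ W : Submodule ℝ (Fin N → ℝ), Module.finrank ℝ W = d ∧
    (∀ v ∈ W, dotp v σ = 0) ∧
    ∀ v ∈ W, v ≠ 0 →
      hessH N P c g σ v v - (dotp (gradH N P c g σ) σ / N) * ∑ i, (v i) ^ 2 < 0}

/-- Critical points of index `N-1-k` in the superlevel set. -/
def crtSetIdx (N P : ℕ) (c : ℕ → ℝ) (g : (k : ℕ) → (Fin k → Fin N) → ℝ)
    (η : ℝ) (k : ℕ) : Set (Fin N → ℝ) :=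
  {σ | σ ∈ crtSet N P c g η ∧ critIndex N P c g σ = N - 1 - k}

/-- Coefficients of the pure p-spin model. -/
def pureC (p : ℕ) : ℕ → ℝ := fun k => if k = p then 1 else 0

/-- The uniform probability measure on the sphere `S_N`. -/
def sphereUniform (N : ℕ) : Measure (Fin N → ℝ) :=
  Measure.map (fun g i => Real.sqrt N * g i / Real.sqrt (∑ j, (g j) ^ 2))
    (Measure.pi fun _ : Fin N => gaussianReal 0 1)

/-- The band around `m`. -/
def band (N : ℕ) (m : Fin N → ℝ) (δ : ℝ) : Set (Fin N → ℝ) :=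
  {σ | σ ∈ sphereSet N ∧ |dotp (σ - m) m| < N * δ}

/-- `k`-tuples from the band with pairwise overlaps close to `⟨m,m⟩`. -/
def bandK (N k : ℕ) (m : Fin N → ℝ) (δ ε : ℝ) : Set (Fin k → Fin N → ℝ) :=
  {σs | (∀ i, σs i ∈ band N m δ) ∧
    ∀ i j, i ≠ j → |dotp (σs i) (σs j) - dotp m m| < N * ε}

/-- `∫₀ᵗ γ(s) ds`, valued in `ℝ≥0∞`. -/
def gammaLInt (γ : ℝ → ℝ) (t : ℝ) : ℝ≥0∞ := ∫⁻ s in Set.Ioo 0 t, ENNReal.ofReal (γ s)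

/-- The zero-temperature spherical Parisi functional (Crisanti–Sommers form), with the
convention `1/0 = +∞`. -/
def PFunE (P : ℕ) (c : ℕ → ℝ) (γ : ℝ → ℝ) : ℝ≥0∞ :=
  ⨅ L ∈ {L : ℝ | gammaLInt γ 1 ≤ ENNReal.ofReal L},
    (∫⁻ t in Set.Ioo (0 : ℝ) 1,
      (ENNReal.ofReal (xiD2 P c t * (L - (gammaLInt γ t).toReal))
        + (ENNReal.ofReal (L - (gammaLInt γ t).toReal))⁻¹)) / 2

/-- The space `𝒰` of order parameters: non-decreasing, non-negative, integrable on `[0,1)`. -/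
def calU : Set (ℝ → ℝ) :=
  {γ | (∀ t ∈ Set.Ico (0 : ℝ) 1, 0 ≤ γ t) ∧ MonotoneOn γ (Set.Ico 0 1) ∧
    IntegrableOn γ (Set.Ioo 0 1)}

/-- The support of `γ`: points of `[0,1]` near which `γ` is not constant. -/
def suppGamma (γ : ℝ → ℝ) : Set ℝ :=
  {q | q ∈ Set.Icc (0 : ℝ) 1 ∧ ∀ ε > 0, ∃ s ∈ Set.Ico (0 : ℝ) 1, ∃ t ∈ Set.Ico (0 : ℝ) 1,
    |s - q| < ε ∧ |t - q| < ε ∧ γ s ≠ γ t}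

/-- The superlevel set `L_N(η)`. -/
def levelSet (N P : ℕ) (c : ℕ → ℝ) (g : (k : ℕ) → (Fin k → Fin N) → ℝ)
    (η : ℝ) : Set (Fin N → ℝ) :=
  {σ | σ ∈ sphereSet N ∧ (N : ℝ) * η ≤ hamiltonian N P c g σ}

/-- Threshold energy of the pure p-spin model. -/
def THRp (p : ℕ) : ℝ := 2 * Real.sqrt (((p : ℝ) - 1) / p)

/-- The function `J` of the pure p-spin complexity. -/
def Jp (p : ℕ) (η : ℝ) : ℝ :=
  η / (THRp p) ^ 2 * Real.sqrt (η ^ 2 - (THRp p) ^ 2)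
    - Real.log (η + Real.sqrt (η ^ 2 - (THRp p) ^ 2)) + Real.log (THRp p)

/-- The annealed complexity of the pure p-spin spherical model. -/
def SigmaPure (p : ℕ) (η : ℝ) : ℝ :=
  if η ≤ 0 then Real.log ((p : ℝ) - 1) / 2
  else if η ≤ THRp p then
    Real.log ((p : ℝ) - 1) / 2 - ((p : ℝ) - 2) / (4 * ((p : ℝ) - 1)) * η ^ 2
  else Real.log ((p : ℝ) - 1) / 2 - ((p : ℝ) - 2) / (4 * ((p : ℝ) - 1)) * η ^ 2 - Jp p η

/-- Couplings, unflattened from a vector indexed by `GIdx N P`. -/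
def unflatten (N P : ℕ) (g : GIdx N P → ℝ) : (k : ℕ) → (Fin k → Fin N) → ℝ :=
  fun k j => if h : k ∈ Finset.Icc 2 P then g ⟨⟨k, h⟩, j⟩ else 0

/-- `ξ'''`. -/
def xiD3 (P : ℕ) (c : ℕ → ℝ) (x : ℝ) : ℝ :=
  ∑ k ∈ Finset.Icc 2 P, (k : ℝ) * ((k : ℝ) - 1) * ((k : ℝ) - 2) * (c k) ^ 2 * x ^ (k - 3)

/-!
At a point `σ` of index at least `N - 1 - k` and energy at most `N (THR - ε)`, Euler's identity
turns the energy bound into a bound on the radial derivative. On the orthogonal complement of some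
orthonormal frame of `k + 1` vectors, the first of which is `σ / √N`, the Hessian of `H_N` is then
smaller, by a macroscopic amount, than the edge of its typical spectrum.

For a fixed frame, the compressed Hessian is the quadratic form of a Gaussian matrix of size nearly
`N`. Its maximum is bounded below greedily: moving in the direction of the first row gains the
length of that row, about `√N`, and the matrix seen from there is again Gaussian with one dimension
less. Staying below the edge forces order `N` independent rows to be atypically short, which has
probability `exp (-c N ^ 2)`. This beats the `exp (O (N log N))` frames of a net fine enough for the
Hessian not to change noticeably between a frame and its nearest point of the net.
-/

/-! ### Gaussian vectors -/

/-- The law of a vector of i.i.d. standard Gaussians indexed by `ι`. -/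
abbrev gaussPi (ι : Type*) [Fintype ι] : Measure (ι → ℝ) :=
  Measure.pi fun _ : ι => gaussianReal 0 1

lemma map_adjoint_stdGaussian {E F : Type*} [NormedAddCommGroup E] [InnerProductSpace ℝ E]
    [FiniteDimensional ℝ E] [MeasurableSpace E] [BorelSpace E] [NormedAddCommGroup F]
    [InnerProductSpace ℝ F] [FiniteDimensional ℝ F] [MeasurableSpace F] [BorelSpace F]
    (L : F →ₗᵢ[ℝ] E) :
    (stdGaussian E).map (ContinuousLinearMap.adjoint L.toContinuousLinearMap) = stdGaussian F := by
  refine Measure.ext_of_charFun (funext fun t => ?_)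
  rw [charFun_stdGaussian, ← L.norm_map, ← charFun_stdGaussian, charFun_apply, charFun_apply,
    integral_map (by fun_prop) (by fun_prop)]
  simp only [ContinuousLinearMap.adjoint_inner_left, LinearIsometry.coe_toContinuousLinearMap]

section

variable {ι κ : Type*} [Fintype ι] [Fintype κ]

lemma map_inner_gaussPi_of_orthonormal {c : ι → EuclideanSpace ℝ κ} (hc : Orthonormal ℝ c) :
    (gaussPi κ).map (fun x i => inner ℝ (c i) (WithLp.toLp 2 x)) = gaussPi ι := by
  classical
  let b := EuclideanSpace.basisFun ι ℝ
  let L : EuclideanSpace ℝ ι →ₗᵢ[ℝ] EuclideanSpace ℝ κ :=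
    (b.toBasis.constr ℝ c).isometryOfOrthonormal (v := b.toBasis)
      (by simp)
      (by convert hc; ext1 i; exact b.toBasis.constr_basis ℝ c i)
  have hL : ∀ i, L (b i) = c i := fun i => by
    rw [← b.coe_toBasis]; exact b.toBasis.constr_basis ℝ c i
  have hcoord : (fun (x : κ → ℝ) i => inner ℝ (c i) (WithLp.toLp 2 x)) = fun x =>
      WithLp.ofLp (ContinuousLinearMap.adjoint L.toContinuousLinearMap (WithLp.toLp 2 x)) := by
    ext x i
    rw [← hL, ← L.coe_toContinuousLinearMap, ← ContinuousLinearMap.adjoint_inner_right,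
      EuclideanSpace.basisFun_inner]
  have key := map_adjoint_stdGaussian L
  rw [← map_pi_eq_stdGaussian, ← map_pi_eq_stdGaussian,
    Measure.map_map (by fun_prop) (by fun_prop)] at key
  replace key := congrArg (Measure.map WithLp.ofLp) key
  rw [Measure.map_map (by fun_prop) (by fun_prop), Measure.map_map (by fun_prop) (by fun_prop)]
    at key
  rw [hcoord]
  exact key.trans Measure.map_id

lemma map_comp_gaussPi_of_injective {e : ι → κ} (he : Function.Injective e) :
    (gaussPi κ).map (fun x => x ∘ e) = gaussPi ι := by
  classical
  rw [← map_inner_gaussPi_of_orthonormal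
    ((EuclideanSpace.orthonormal_single (𝕜 := ℝ) (ι := κ)).comp e he)]
  congr 1
  ext x i
  simp [EuclideanSpace.inner_single_left]

lemma lintegral_gaussPi_eval (i : ι) {f : ℝ → ℝ≥0∞} (hf : Measurable f) :
    ∫⁻ x, f (x i) ∂(gaussPi ι) = ∫⁻ y, f y ∂(gaussianReal 0 1) :=
  (measurePreserving_eval (fun _ : ι => gaussianReal 0 1) i).lintegral_comp hf

lemma lintegral_gaussPi_sum {f : (ι ⊕ κ → ℝ) → ℝ≥0∞} (hf : Measurable f) :
    ∫⁻ x, f x ∂(gaussPi (ι ⊕ κ))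
      = ∫⁻ a, ∫⁻ b, f (Sum.elim a b) ∂(gaussPi κ) ∂(gaussPi ι) := by
  have h := measurePreserving_sumPiEquivProdPi_symm (fun _ : ι ⊕ κ => gaussianReal 0 1)
  rw [← h.lintegral_comp hf]
  exact lintegral_prod _ (hf.comp h.measurable).aemeasurable

end

lemma lintegral_exp_mul_gaussianReal (t : ℝ) :
    ∫⁻ x, ENNReal.ofReal (Real.exp (t * x)) ∂(gaussianReal 0 1)
      = ENNReal.ofReal (Real.exp (t ^ 2 / 2)) := by
  have hmgf := mgf_gaussianReal (p := gaussianReal 0 1) (X := id) (μ := 0) (v := 1) (by simp) t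
  simp only [mgf, id, zero_mul, zero_add, NNReal.coe_one, one_mul] at hmgf
  rw [← ofReal_integral_eq_lintegral_ofReal (integrable_exp_mul_gaussianReal t)
    (ae_of_all _ fun x => (Real.exp_pos _).le), hmgf]

lemma lintegral_exp_neg_mul_sq_gaussianReal {s : ℝ} (hs : -(1 / 2) < s) :
    ∫⁻ x, ENNReal.ofReal (Real.exp (-s * x ^ 2)) ∂(gaussianReal 0 1)
      = ENNReal.ofReal (√(1 + 2 * s))⁻¹ := by
  have hdens : ∀ x : ℝ, (gaussianPDF 0 1 * fun x => ENNReal.ofReal (Real.exp (-s * x ^ 2))) x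
      = ENNReal.ofReal ((√(2 * Real.pi))⁻¹ * Real.exp (-(s + 1 / 2) * x ^ 2)) := fun x => by
    rw [Pi.mul_apply, gaussianPDF, ← ENNReal.ofReal_mul (gaussianPDFReal_nonneg _ _ _),
      gaussianPDFReal, NNReal.coe_one, mul_one, mul_assoc, ← Real.exp_add]
    congr 3
    ring
  rw [gaussianReal_of_var_ne_zero 0 one_ne_zero,
    lintegral_withDensity_eq_lintegral_mul _ (measurable_gaussianPDF 0 1) (by fun_prop),
    lintegral_congr hdens, ← ofReal_integral_eq_lintegral_ofReal
      ((integrable_exp_neg_mul_sq (by linarith)).const_mul _) (ae_of_all _ fun x => by positivity),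
    integral_const_mul, integral_gaussian, ← Real.sqrt_inv, ← Real.sqrt_inv,
    ← Real.sqrt_mul (by positivity)]
  have : s + 1 / 2 ≠ 0 := by linarith
  have : 1 + 2 * s ≠ 0 := by linarith
  congr 2
  field_simp
  rw [add_comm, div_self (by linarith)]

section

variable {ι : Type*} [Fintype ι]

lemma lintegral_exp_neg_mul_sum_sq_gaussPi {s : ℝ} (hs : -(1 / 2) < s) :
    ∫⁻ x, ENNReal.ofReal (Real.exp (-s * ∑ i, x i ^ 2)) ∂(gaussPi ι)
      = ENNReal.ofReal ((√(1 + 2 * s))⁻¹ ^ Fintype.card ι) := by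
  have hprod : ∀ x : ι → ℝ, ENNReal.ofReal (Real.exp (-s * ∑ i, x i ^ 2))
      = ∏ i, ENNReal.ofReal (Real.exp (-s * x i ^ 2)) := fun x => by
    rw [Finset.mul_sum, Real.exp_sum, ENNReal.ofReal_prod_of_nonneg]
    exact fun i _ => (Real.exp_pos _).le
  have hind : iIndepFun (fun (i : ι) (x : ι → ℝ) => ENNReal.ofReal (Real.exp (-s * x i ^ 2)))
      (gaussPi ι) :=
    iIndepFun_pi (μ := fun _ : ι => gaussianReal 0 1)
      (X := fun _ y => ENNReal.ofReal (Real.exp (-s * y ^ 2))) (by fun_prop)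
  have heval : ∀ i : ι, ∫⁻ x : ι → ℝ, ENNReal.ofReal (Real.exp (-s * x i ^ 2)) ∂(gaussPi ι)
      = ENNReal.ofReal (√(1 + 2 * s))⁻¹ := fun i =>
    (lintegral_gaussPi_eval i (f := fun y => ENNReal.ofReal (Real.exp (-s * y ^ 2)))
      (by fun_prop)).trans (lintegral_exp_neg_mul_sq_gaussianReal hs)
  rw [lintegral_congr hprod,
    lintegral_prod_eq_prod_lintegral_of_indepFun Finset.univ _ hind (by fun_prop)]
  simp only [heval, Finset.prod_const, Finset.card_univ]
  rw [ENNReal.ofReal_pow (by positivity)]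

end

section

variable {ι : Type*} [Fintype ι]

lemma lintegral_exp_neg_mul_norm_sq_gaussPi {s : ℝ} (hs : -(1 / 2) < s) :
    ∫⁻ x, ENNReal.ofReal (Real.exp (-s * ‖WithLp.toLp 2 x‖ ^ 2)) ∂(gaussPi ι)
      = ENNReal.ofReal ((√(1 + 2 * s))⁻¹ ^ Fintype.card ι) := by
  simp only [EuclideanSpace.real_norm_sq_eq, lintegral_exp_neg_mul_sum_sq_gaussPi hs]

lemma inv_sqrt_pow_le_exp {s x : ℝ} {d : ℕ} (hs : 0 ≤ s) (hx : x * (1 + s) ≤ d) :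
    (√(1 + 2 * s))⁻¹ ^ d ≤ Real.exp (-(s * x)) := by
  have hlog : s / (1 + s) ≤ Real.log √(1 + 2 * s) := by
    rw [Real.log_sqrt (by positivity), le_div_iff₀ two_pos]
    refine le_trans (le_of_eq ?_) (Real.le_log_one_add_of_nonneg (by positivity : 0 ≤ 2 * s))
    field_simp
    ring
  have hroot : (√(1 + 2 * s))⁻¹ ≤ Real.exp (-(s / (1 + s))) := by
    rw [Real.exp_neg]
    gcongr
    rwa [← Real.le_log_iff_exp_le (by positivity)]
  calc (√(1 + 2 * s))⁻¹ ^ d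
      ≤ Real.exp (-(s / (1 + s))) ^ d := by gcongr
    _ = Real.exp (-(s / (1 + s) * d)) := by rw [← Real.exp_nat_mul]; ring_nf
    _ ≤ Real.exp (-(s / (1 + s) * (x * (1 + s)))) := by gcongr
    _ = Real.exp (-(s * x)) := by field_simp

lemma exp_neg_mul_le_exp_add_exp_sq {a r s z : ℝ} (hs : 0 ≤ s) (hsr : s * r = a) (hz : 0 ≤ z)
    (hr : 0 ≤ r) : Real.exp (-a * z) ≤ Real.exp (-a * r) + Real.exp (-s * z ^ 2) := by
  subst hsr
  rcases le_total r z with hrz | hzr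
  · have : Real.exp (-(s * r) * z) ≤ Real.exp (-(s * r) * r) :=
      Real.exp_le_exp.2 (by nlinarith [mul_nonneg hs hr])
    linarith [Real.exp_pos (-s * z ^ 2)]
  · have : Real.exp (-(s * r) * z) ≤ Real.exp (-s * z ^ 2) :=
      Real.exp_le_exp.2 (by nlinarith [mul_nonneg hs hz])
    linarith [Real.exp_pos (-(s * r) * r)]

/-- The typical value of `‖x‖` is `√card ι`; the condition on `r` says that `r` lies below it by a
margin comparable to `a`. -/
lemma lintegral_exp_neg_mul_norm_gaussPi_le {a r : ℝ} (ha : 0 ≤ a) (hr : 0 < r)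
    (hcard : r * (r + a) ≤ Fintype.card ι) :
    ∫⁻ x, ENNReal.ofReal (Real.exp (-a * ‖WithLp.toLp 2 x‖)) ∂(gaussPi ι)
      ≤ ENNReal.ofReal (2 * Real.exp (-a * r)) := by
  obtain ⟨s, hs, hsr⟩ : ∃ s : ℝ, 0 ≤ s ∧ s * r = a :=
    ⟨a / r, by positivity, div_mul_cancel₀ a hr.ne'⟩
  have hpt : ∀ x : ι → ℝ, ENNReal.ofReal (Real.exp (-a * ‖WithLp.toLp 2 x‖))
      ≤ ENNReal.ofReal (Real.exp (-a * r)) +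
        ENNReal.ofReal (Real.exp (-s * ‖WithLp.toLp 2 x‖ ^ 2)) := fun x => by
    rw [← ENNReal.ofReal_add (Real.exp_pos _).le (Real.exp_pos _).le]
    exact ENNReal.ofReal_le_ofReal (exp_neg_mul_le_exp_add_exp_sq hs hsr (norm_nonneg _) hr.le)
  have hcard' : r ^ 2 * (1 + s) ≤ Fintype.card ι := by
    calc r ^ 2 * (1 + s) = r * (r + s * r) := by ring
      _ ≤ Fintype.card ι := hsr ▸ hcard
  refine (lintegral_mono hpt).trans ?_
  rw [lintegral_add_left (by fun_prop), lintegral_const, measure_univ, mul_one,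
    lintegral_exp_neg_mul_norm_sq_gaussPi (by linarith),
    ← ENNReal.ofReal_add (Real.exp_pos _).le (by positivity), two_mul (Real.exp _)]
  gcongr
  refine (inv_sqrt_pow_le_exp hs hcard').trans_eq ?_
  rw [← hsr]
  ring_nf

lemma gaussPi_lt_norm_le :
    gaussPi ι {x | 2 * √(Fintype.card ι) < ‖WithLp.toLp 2 x‖}
      ≤ ENNReal.ofReal (Real.exp (-(Fintype.card ι / 2))) := by
  set d := Fintype.card ι
  have hsub : ∀ x : ι → ℝ, {x : ι → ℝ | 2 * √d < ‖WithLp.toLp 2 x‖}.indicator 1 x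
      ≤ ENNReal.ofReal (Real.exp (-d)) *
        ENNReal.ofReal (Real.exp (-(-(1 / 4)) * ‖WithLp.toLp 2 x‖ ^ 2)) := fun x => by
    refine Set.indicator_apply_le' (fun hx => ?_) fun _ => zero_le
    have hsq : 4 * (d : ℝ) ≤ ‖WithLp.toLp 2 x‖ ^ 2 := by
      calc 4 * (d : ℝ) = (2 * √d) ^ 2 := by rw [mul_pow, Real.sq_sqrt d.cast_nonneg]; norm_num
        _ ≤ _ := by gcongr; exact hx.le
    rw [← ENNReal.ofReal_mul (Real.exp_pos _).le, ← Real.exp_add, Pi.one_apply,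
      ENNReal.one_le_ofReal]
    exact Real.one_le_exp (by linarith)
  have hsqrt : (√(1 + 2 * -(1 / 4)))⁻¹ ≤ Real.exp (1 / 2) := by
    rw [← Real.sqrt_inv, Real.sqrt_le_left (Real.exp_pos _).le, ← Real.exp_nat_mul]
    norm_num
    exact (by norm_num : (2 : ℝ) = 1 + 1).trans_le (Real.add_one_le_exp 1)
  rw [← lintegral_indicator_one (measurableSet_lt (by fun_prop) (by fun_prop))]
  refine (lintegral_mono hsub).trans ?_
  rw [lintegral_const_mul _ (by fun_prop), lintegral_exp_neg_mul_norm_sq_gaussPi (by norm_num),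
    ← ENNReal.ofReal_mul (Real.exp_pos _).le]
  refine ENNReal.ofReal_le_ofReal ?_
  calc Real.exp (-d) * (√(1 + 2 * -(1 / 4)))⁻¹ ^ d
      ≤ Real.exp (-d) * Real.exp (1 / 2) ^ d := by gcongr
    _ = Real.exp (-(d / 2)) := by
      rw [← Real.exp_nat_mul, ← Real.exp_add]
      congr 1
      ring

end

/-! ### Quadratic forms of Gaussian matrices -/

section

variable {ι : Type*}

/-- The rank-one matrix `x ⊗ y = (x i * y j)`, as a vector of the Euclidean space of matrices. -/
def outer : EuclideanSpace ℝ ι →ₗ[ℝ] EuclideanSpace ℝ ι →ₗ[ℝ] EuclideanSpace ℝ (ι × ι) :=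
  LinearMap.mk₂ ℝ (fun x y => WithLp.toLp 2 fun q => x q.1 * y q.2)
    (fun _ _ _ => by ext; simp [add_mul]) (fun _ _ _ => by ext; simp [mul_assoc])
    (fun _ _ _ => by ext; simp [mul_add]) (fun _ _ _ => by ext; simp [mul_left_comm])

lemma outer_apply (x y : EuclideanSpace ℝ ι) (q : ι × ι) : outer x y q = x q.1 * y q.2 := rfl

variable [Fintype ι]

lemma inner_outer (x y x' y' : EuclideanSpace ℝ ι) :
    inner ℝ (outer x y) (outer x' y') = inner ℝ x x' * inner ℝ y y' := by
  simp only [PiLp.inner_apply, outer_apply, Fintype.sum_prod_type, Finset.sum_mul_sum,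
    RCLike.inner_apply, conj_trivial]
  exact Finset.sum_congr rfl fun i _ => Finset.sum_congr rfl fun j _ => by ring

/-- The quadratic form `x ↦ ⟨x, M x⟩` of a square matrix `M`, written as the linear functional
`⟨x ⊗ x, M⟩` of `M`. The matrix need not be symmetric. -/
def quadForm (M : ι × ι → ℝ) (x : EuclideanSpace ℝ ι) : ℝ :=
  inner ℝ (outer x x) (WithLp.toLp 2 M)

lemma quadForm_eq_sum (M : ι × ι → ℝ) (x : EuclideanSpace ℝ ι) :
    quadForm M x = ∑ q, x q.1 * x q.2 * M q := by
  simp only [quadForm, PiLp.inner_apply, outer_apply, RCLike.inner_apply, conj_trivial, mul_comm]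

lemma continuous_quadForm (x : EuclideanSpace ℝ ι) : Continuous fun M => quadForm M x := by
  unfold quadForm
  fun_prop

variable {n : ℕ}

/-- The orthonormal family of matrices attached to an orthonormal family `b` whose first vector is
singled out: the diagonal entry at `b 0`, the symmetrized row of `b 0`, and the remaining block. -/
def peelFamily (b : Fin (n + 1) → EuclideanSpace ℝ ι) :
    Unit ⊕ Fin n ⊕ Fin n × Fin n → EuclideanSpace ℝ (ι × ι)
  | .inl _ => outer (b 0) (b 0)
  | .inr (.inl j) => (√2)⁻¹ • (outer (b 0) (b j.succ) + outer (b j.succ) (b 0))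
  | .inr (.inr q) => outer (b q.1.succ) (b q.2.succ)

lemma orthonormal_peelFamily {b : Fin (n + 1) → EuclideanSpace ℝ ι} (hb : Orthonormal ℝ b) :
    Orthonormal ℝ (peelFamily b) := by
  have hb' := orthonormal_iff_ite.1 hb
  have hsqrt : (√2)⁻¹ * ((√2)⁻¹ * 2) = (1 : ℝ) := by
    rw [← mul_assoc, ← mul_inv, Real.mul_self_sqrt two_pos.le, inv_mul_cancel₀ two_ne_zero]
  rw [orthonormal_iff_ite]
  rintro (⟨⟩ | j | ⟨i, j⟩) (⟨⟩ | j' | ⟨i', j'⟩) <;>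
    simp only [peelFamily, inner_smul_left, inner_smul_right, inner_add_left, inner_add_right,
      inner_outer, hb'] <;> simp [Fin.succ_ne_zero, (Fin.succ_ne_zero _).symm]
  · split_ifs
    · linarith
    · simp
  · split_ifs <;> simp_all

/-- The coordinates of a matrix along `peelFamily b`. -/
def peelCoords (b : Fin (n + 1) → EuclideanSpace ℝ ι) (M : ι × ι → ℝ) :
    Unit ⊕ Fin n ⊕ Fin n × Fin n → ℝ :=
  fun i => inner ℝ (peelFamily b i) (WithLp.toLp 2 M)

/-- The value at `b 0 + ∑ j, y j • b (j + 1)` of the quadratic form with coordinates `w` along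
`peelFamily b`; the row has coefficient `√2` because `peelFamily` is normalized. -/
def peelForm (w : Unit ⊕ Fin n ⊕ Fin n × Fin n → ℝ) (y : EuclideanSpace ℝ (Fin n)) : ℝ :=
  w (.inl ()) + √2 * inner ℝ (WithLp.toLp 2 fun j => w (.inr (.inl j))) y
    + quadForm (fun q => w (.inr (.inr q))) y

lemma quadForm_add_sum_smul (b : Fin (n + 1) → EuclideanSpace ℝ ι) (M : ι × ι → ℝ)
    (y : EuclideanSpace ℝ (Fin n)) :
    quadForm M (b 0 + ∑ j, y j • b j.succ) = peelForm (peelCoords b M) y := by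
  have hsqrt : ∀ v : EuclideanSpace ℝ (ι × ι), √2 • (√2)⁻¹ • v = v := fun v => by
    rw [smul_smul, mul_inv_cancel₀ (by positivity), one_smul]
  have houter : outer (b 0 + ∑ j, y j • b j.succ) (b 0 + ∑ j, y j • b j.succ)
      = peelFamily b (.inl ()) + √2 • ∑ j, y j • peelFamily b (.inr (.inl j))
        + ∑ q : Fin n × Fin n, (y q.1 * y q.2) • peelFamily b (.inr (.inr q)) := by
    simp only [peelFamily, Finset.smul_sum, smul_comm (√2) (y _), hsqrt, map_add, map_sum,
      map_smul, LinearMap.add_apply, LinearMap.sum_apply, LinearMap.smul_apply, smul_add,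
      Finset.sum_add_distrib, Fintype.sum_prod_type, mul_smul]
    rw [Finset.sum_comm (f := fun i j => y i • y j • outer (b j.succ) (b i.succ))]
    simp only [smul_comm (y _) (y _)]
    abel
  rw [quadForm, houter, peelForm, quadForm_eq_sum]
  simp only [inner_add_left, inner_smul_left, sum_inner, peelCoords, PiLp.inner_apply,
    RCLike.inner_apply, conj_trivial]

lemma inner_add_sum_smul {E : Type*} [NormedAddCommGroup E] [InnerProductSpace ℝ E]
    {b : Fin (n + 1) → E} (hb : Orthonormal ℝ b) (y : EuclideanSpace ℝ (Fin n)) :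
    inner ℝ (b 0) (b 0 + ∑ j, y j • b j.succ) = 1 ∧
      ‖b 0 + ∑ j, y j • b j.succ‖ ^ 2 = 1 + ‖y‖ ^ 2 := by
  have hperp : inner ℝ (b 0) (∑ j, y j • b j.succ) = 0 := by
    simp [inner_sum, inner_smul_right, orthonormal_iff_ite.1 hb, (Fin.succ_ne_zero _).symm]
  have hsucc : Orthonormal ℝ fun j : Fin n => b j.succ := hb.comp _ (Fin.succ_injective n)
  have hnorm : ‖∑ j, y j • b j.succ‖ ^ 2 = ‖y‖ ^ 2 := by
    rw [← real_inner_self_eq_norm_sq, hsucc.inner_sum, EuclideanSpace.real_norm_sq_eq]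
    simp only [conj_trivial, sq]
  constructor
  · rw [inner_add_right, hperp, real_inner_self_eq_norm_sq, hb.1 0, one_pow, add_zero]
  · rw [norm_add_sq_real, hperp, hb.1 0, hnorm]
    ring

end

section

variable {ι : Type*} [Fintype ι] {n : ℕ}

/-- The Laplace functional, with parameter `l`, of the largest value of the quadratic form of `M`
on the slice `⟨u, x⟩ = 1` of the sphere `‖x‖ ^ 2 = ρ`. Fixing the component along `u` is what makes
the functional reproduce itself when the direction `u` is peeled off. -/
def sliceLaplace (l ρ : ℝ) (M : ι × ι → ℝ) (u : EuclideanSpace ℝ ι) : ℝ≥0∞ :=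
  ⨅ x : {x : EuclideanSpace ℝ ι // inner ℝ u x = 1 ∧ ‖x‖ ^ 2 = ρ},
    ENNReal.ofReal (Real.exp (-l * quadForm M x))

/-- The Laplace functional of the largest value of `peelForm w` on the sphere `‖y‖ ^ 2 = ρ`. -/
def peelLaplace (l ρ : ℝ) (w : Unit ⊕ Fin n ⊕ Fin n × Fin n → ℝ) : ℝ≥0∞ :=
  ⨅ y : {y : EuclideanSpace ℝ (Fin n) // ‖y‖ ^ 2 = ρ},
    ENNReal.ofReal (Real.exp (-l * peelForm w y))

lemma measurable_peelLaplace (l ρ : ℝ) : Measurable (peelLaplace (n := n) l ρ) := by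
  refine UpperSemicontinuous.measurable
    (upperSemicontinuous_iInf fun y => Continuous.upperSemicontinuous ?_)
  simp only [peelForm, quadForm_eq_sum]
  exact ENNReal.continuous_ofReal.comp (by fun_prop)

lemma sliceLaplace_le_peelLaplace (l ρ : ℝ) {b : Fin (n + 1) → EuclideanSpace ℝ ι}
    (hb : Orthonormal ℝ b) (M : ι × ι → ℝ) :
    sliceLaplace l (1 + ρ) M (b 0) ≤ peelLaplace l ρ (peelCoords b M) := by
  refine le_iInf fun y => ?_
  obtain ⟨hinner, hnorm⟩ := inner_add_sum_smul hb y.1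
  refine iInf_le_of_le ⟨_, hinner, by rw [hnorm, y.2]⟩ (le_of_eq ?_)
  rw [quadForm_add_sum_smul]

lemma exists_norm_eq_one_and_norm_smul {E : Type*} [NormedAddCommGroup E] [NormedSpace ℝ E]
    [Nontrivial E] (h : E) : ∃ u : E, ‖u‖ = 1 ∧ ‖h‖ • u = h := by
  rcases eq_or_ne h 0 with rfl | hh
  · obtain ⟨u, hu⟩ := exists_norm_eq E zero_le_one
    exact ⟨u, hu, by simp⟩
  · exact ⟨‖h‖⁻¹ • h, norm_smul_inv_norm hh, smul_inv_smul₀ (norm_ne_zero_iff.2 hh) h⟩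

/-- The next direction to peel off is that of the row `h`, so that the slice condition turns the
cross term `√2 * ⟨h, y⟩` into the constant `√2 * ‖h‖`. -/
lemma exists_peelLaplace_le [NeZero n] (l ρ : ℝ) (h : Fin n → ℝ) :
    ∃ u : EuclideanSpace ℝ (Fin n), ‖u‖ = 1 ∧ ∀ (a : Unit → ℝ) (M : Fin n × Fin n → ℝ),
      peelLaplace l ρ (Sum.elim a (Sum.elim h M))
        ≤ ENNReal.ofReal (Real.exp (-l * a ())) *
          (ENNReal.ofReal (Real.exp (-(l * √2) * ‖WithLp.toLp 2 h‖)) * sliceLaplace l ρ M u) := by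
  obtain ⟨u, hu, hhu⟩ := exists_norm_eq_one_and_norm_smul (WithLp.toLp 2 h)
  refine ⟨u, hu, fun a M => ?_⟩
  have hpos : ∀ x : ℝ, ENNReal.ofReal (Real.exp x) ≠ 0 := fun x => by simpa using Real.exp_pos x
  rw [sliceLaplace, ENNReal.mul_iInf_of_ne (hpos _) ENNReal.ofReal_ne_top,
    ENNReal.mul_iInf_of_ne (hpos _) ENNReal.ofReal_ne_top]
  refine le_iInf fun x => iInf_le_of_le ⟨x, x.2.2⟩ (le_of_eq ?_)
  have hinner : inner ℝ (WithLp.toLp 2 h) x.1 = ‖WithLp.toLp 2 h‖ := by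
    nth_rewrite 1 [← hhu]
    rw [real_inner_smul_left, x.2.1, mul_one]
  simp only [peelForm, Sum.elim_inl, Sum.elim_inr, hinner]
  rw [← ENNReal.ofReal_mul (Real.exp_pos _).le, ← ENNReal.ofReal_mul (Real.exp_pos _).le,
    ← Real.exp_add, ← Real.exp_add]
  ring_nf

lemma lintegral_sliceLaplace_one_le (l : ℝ) {u : EuclideanSpace ℝ ι} (hu : ‖u‖ = 1) :
    ∫⁻ M, sliceLaplace l 1 M u ∂(gaussPi (ι × ι)) ≤ ENNReal.ofReal (Real.exp (l ^ 2 / 2)) := by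
  have horth : Orthonormal ℝ fun _ : Unit => outer u u := by
    rw [orthonormal_iff_ite]
    intro _ _
    rw [inner_outer, real_inner_self_eq_norm_sq, hu, one_pow, one_mul, if_pos rfl]
  calc ∫⁻ M, sliceLaplace l 1 M u ∂(gaussPi (ι × ι))
      ≤ ∫⁻ M, ENNReal.ofReal (Real.exp (-l * quadForm M u)) ∂(gaussPi (ι × ι)) :=
        lintegral_mono fun M => iInf_le_of_le ⟨u, by simp [hu], by simp [hu]⟩ le_rfl
    _ = ∫⁻ a, ENNReal.ofReal (Real.exp (-l * a ())) ∂(gaussPi Unit) := by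
        rw [← map_inner_gaussPi_of_orthonormal horth, lintegral_map (by fun_prop) (by fun_prop)]
        rfl
    _ = ENNReal.ofReal (Real.exp (l ^ 2 / 2)) := by
        rw [lintegral_gaussPi_eval () (f := fun y => ENNReal.ofReal (Real.exp (-l * y)))
          (by fun_prop), lintegral_exp_mul_gaussianReal, neg_sq]

lemma lintegral_peelLaplace_le [NeZero n] (l ρ : ℝ) {C : ℝ≥0∞}
    (hC : ∀ u : EuclideanSpace ℝ (Fin n), ‖u‖ = 1 →
      ∫⁻ M, sliceLaplace l ρ M u ∂(gaussPi (Fin n × Fin n)) ≤ C) :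
    ∫⁻ w, peelLaplace l ρ w ∂(gaussPi (Unit ⊕ Fin n ⊕ Fin n × Fin n))
      ≤ ENNReal.ofReal (Real.exp (l ^ 2 / 2)) *
        ((∫⁻ h, ENNReal.ofReal (Real.exp (-(l * √2) * ‖WithLp.toLp 2 h‖)) ∂(gaussPi (Fin n))) *
          C) := by
  have hcond : ∀ (a : Unit → ℝ) (h : Fin n → ℝ),
      ∫⁻ M, peelLaplace l ρ (Sum.elim a (Sum.elim h M)) ∂(gaussPi (Fin n × Fin n))
        ≤ ENNReal.ofReal (Real.exp (-l * a ())) *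
          (ENNReal.ofReal (Real.exp (-(l * √2) * ‖WithLp.toLp 2 h‖)) * C) := fun a h => by
    obtain ⟨u, hu, hle⟩ := exists_peelLaplace_le l ρ h
    refine (lintegral_mono (hle a)).trans ?_
    rw [lintegral_const_mul' _ _ ENNReal.ofReal_ne_top,
      lintegral_const_mul' _ _ ENNReal.ofReal_ne_top]
    gcongr
    exact hC u hu
  have hmeas := measurable_peelLaplace (n := n) l ρ
  have hsum : ∀ a : Unit → ℝ, Measurable
      fun b : Fin n ⊕ Fin n × Fin n → ℝ => (Sum.elim a b : Unit ⊕ Fin n ⊕ Fin n × Fin n → ℝ) :=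
    fun a => measurable_pi_lambda _
      (Sum.rec (fun _ => measurable_const) fun j => measurable_pi_apply j)
  rw [lintegral_gaussPi_sum hmeas]
  calc _ ≤ ∫⁻ a : Unit → ℝ, ∫⁻ h : Fin n → ℝ, ENNReal.ofReal (Real.exp (-l * a ())) *
          (ENNReal.ofReal (Real.exp (-(l * √2) * ‖WithLp.toLp 2 h‖)) * C)
          ∂(gaussPi (Fin n)) ∂(gaussPi Unit) := by
        refine lintegral_mono fun a => ?_
        rw [lintegral_gaussPi_sum (f := fun b => peelLaplace l ρ (Sum.elim a b))
          (hmeas.comp (hsum a))]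
        exact lintegral_mono fun h => hcond a h
    _ = _ := by
        simp_rw [lintegral_const_mul' _ _ ENNReal.ofReal_ne_top]
        rw [lintegral_mul_const _ (by fun_prop), lintegral_mul_const _ (by fun_prop),
          lintegral_gaussPi_eval () (f := fun y => ENNReal.ofReal (Real.exp (-l * y)))
            (by fun_prop), lintegral_exp_mul_gaussianReal, neg_sq]

lemma lintegral_sliceLaplace_le_lintegral_peelLaplace (l ρ : ℝ)
    {u : EuclideanSpace ℝ (Fin (n + 1))} (hu : ‖u‖ = 1) :
    ∫⁻ M, sliceLaplace l (1 + ρ) M u ∂(gaussPi (Fin (n + 1) × Fin (n + 1)))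
      ≤ ∫⁻ w, peelLaplace l ρ w ∂(gaussPi (Unit ⊕ Fin n ⊕ Fin n × Fin n)) := by
  obtain ⟨b, hb⟩ : ∃ b : OrthonormalBasis (Fin (n + 1)) ℝ (EuclideanSpace ℝ (Fin (n + 1))),
      ∀ i ∈ ({0} : Set (Fin (n + 1))), b i = u :=
    Orthonormal.exists_orthonormalBasis_extension_of_card_eq (v := fun _ => u) (by simp)
      (by rw [orthonormal_iff_ite]; rintro ⟨i, rfl⟩ ⟨j, rfl⟩; simp [hu])
  obtain rfl : b 0 = u := hb 0 rfl
  rw [← map_inner_gaussPi_of_orthonormal (orthonormal_peelFamily b.orthonormal),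
    lintegral_map (measurable_peelLaplace l ρ) (by fun_prop)]
  exact lintegral_mono fun M => sliceLaplace_le_peelLaplace l ρ b.orthonormal M

lemma lintegral_sliceLaplace_le {l r : ℝ} (hl : 0 ≤ l) (hr : 0 < r) {T : ℕ}
    (hn : r * (r + l * √2) + T ≤ n) {u : EuclideanSpace ℝ (Fin n)} (hu : ‖u‖ = 1) :
    ∫⁻ M, sliceLaplace l (T + 1) M u ∂(gaussPi (Fin n × Fin n))
      ≤ ENNReal.ofReal (Real.exp (l ^ 2 / 2) *
        (Real.exp (l ^ 2 / 2) * (2 * Real.exp (-(l * √2) * r))) ^ T) := by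
  induction T generalizing n with
  | zero => simpa using lintegral_sliceLaplace_one_le l hu
  | succ T ih =>
    have hgap : 0 < r * (r + l * √2) := by positivity
    obtain _ | n := n
    · push_cast at hn
      linarith [T.cast_nonneg (α := ℝ)]
    push_cast at hn ⊢
    have : NeZero n := ⟨by rintro rfl; push_cast at hn; linarith [T.cast_nonneg (α := ℝ)]⟩
    have hrow := lintegral_exp_neg_mul_norm_gaussPi_le (ι := Fin n) (a := l * √2)
      (by positivity) hr (by rw [Fintype.card_fin]; linarith [T.cast_nonneg (α := ℝ)])
    calc ∫⁻ M, sliceLaplace l (T + 1 + 1) M u ∂(gaussPi (Fin (n + 1) × Fin (n + 1)))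
        ≤ ∫⁻ w, peelLaplace l (T + 1) w ∂(gaussPi (Unit ⊕ Fin n ⊕ Fin n × Fin n)) := by
          rw [add_comm ((T : ℝ) + 1)]
          exact lintegral_sliceLaplace_le_lintegral_peelLaplace l _ hu
      _ ≤ _ := lintegral_peelLaplace_le l _ fun v hv => ih (by linarith) hv
      _ ≤ ENNReal.ofReal (Real.exp (l ^ 2 / 2)) *
            (ENNReal.ofReal (2 * Real.exp (-(l * √2) * r)) *
              ENNReal.ofReal (Real.exp (l ^ 2 / 2) *
                (Real.exp (l ^ 2 / 2) * (2 * Real.exp (-(l * √2) * r))) ^ T)) := by gcongr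
      _ = _ := by
          rw [← ENNReal.ofReal_mul (by positivity), ← ENNReal.ofReal_mul (by positivity)]
          ring_nf

end

section

variable {n : ℕ}

lemma gaussPi_forall_quadForm_le_le_mul_lintegral {ι : Type*} [Fintype ι] {l ρ : ℝ} (hl : 0 ≤ l)
    (τ : ℝ) (u : EuclideanSpace ℝ ι) :
    gaussPi (ι × ι) {M | ∀ x, quadForm M x ≤ τ * ‖x‖ ^ 2}
      ≤ ENNReal.ofReal (Real.exp (l * (τ * ρ))) *
        ∫⁻ M, sliceLaplace l ρ M u ∂(gaussPi (ι × ι)) := by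
  have hmeas : MeasurableSet {M : ι × ι → ℝ | ∀ x, quadForm M x ≤ τ * ‖x‖ ^ 2} := by
    rw [Set.ofPred_forall]
    exact (isClosed_iInter fun x =>
      isClosed_le (continuous_quadForm x) continuous_const).measurableSet
  rw [← lintegral_const_mul' _ _ ENNReal.ofReal_ne_top, ← lintegral_indicator_one hmeas]
  refine lintegral_mono fun M => Set.indicator_apply_le' (fun hM => ?_) fun _ => zero_le
  rw [sliceLaplace, ENNReal.mul_iInf_of_ne (by simpa using Real.exp_pos _) ENNReal.ofReal_ne_top]
  refine le_iInf fun x => ?_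
  have hx : quadForm M x ≤ τ * ρ := (hM x.1).trans_eq (by rw [x.2.2])
  rw [← ENNReal.ofReal_mul (Real.exp_pos _).le, ← Real.exp_add, Pi.one_apply,
    ENNReal.one_le_ofReal]
  exact Real.one_le_exp (by linarith [mul_le_mul_of_nonneg_left hx hl])

lemma gaussPi_forall_quadForm_le_le_exp {l r : ℝ} (hl : 0 ≤ l) (hr : 0 < r) {T : ℕ}
    (hn : r * (r + l * √2) + T ≤ n) (τ : ℝ) :
    gaussPi (Fin n × Fin n) {M | ∀ x, quadForm M x ≤ τ * ‖x‖ ^ 2}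
      ≤ ENNReal.ofReal (Real.exp (l * τ + l ^ 2 / 2 +
        T * (l * τ + l ^ 2 / 2 + Real.log 2 - l * √2 * r))) := by
  have hgap : 0 < r * (r + l * √2) := by positivity
  have hn0 : (0 : ℝ) < n := by linarith [T.cast_nonneg (α := ℝ)]
  have : Nonempty (Fin n) := Fin.pos_iff_nonempty.1 (Nat.cast_pos.1 hn0)
  obtain ⟨u, hu⟩ := exists_norm_eq (EuclideanSpace ℝ (Fin n)) zero_le_one
  refine (gaussPi_forall_quadForm_le_le_mul_lintegral hl τ u).trans
    ((mul_le_mul_right (lintegral_sliceLaplace_le hl hr hn hu) _).trans_eq ?_)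
  rw [← ENNReal.ofReal_mul (Real.exp_pos _).le]
  congr 1
  rw [← Real.exp_log two_pos, ← Real.exp_add, ← Real.exp_add, ← Real.exp_nat_mul, ← Real.exp_add,
    ← Real.exp_add, Real.exp_log two_pos]
  congr 1
  ring

lemma chernoff_exponent_le {δ N T : ℝ} (hδ : 0 < δ) (hδ1 : δ ≤ 1) (hN : 512 ≤ δ ^ 2 * N)
    (hT : δ * N / 8 - 1 ≤ T) :
    δ / 8 * N * (√2 - δ) + (δ / 8) ^ 2 * N / 2 + T * (δ / 8 * N * (√2 - δ) + (δ / 8) ^ 2 * N / 2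
      + Real.log 2 - δ / 8 * N * √2 * (1 - δ / 4)) ≤ -(δ ^ 3 / 512) * N ^ 2 := by
  have hsqrt : √2 < 3 / 2 := (Real.sqrt_lt' (by norm_num)).2 (by norm_num)
  have hlog : Real.log 2 ≤ 1 := by linarith [Real.log_two_lt_d9]
  have hN0 : 0 < N := pos_of_mul_pos_right (by linarith) (sq_nonneg δ)
  have : 0 < δ * N := by positivity
  have hT0 : 0 ≤ T := by nlinarith
  have hinit : δ / 8 * N * (√2 - δ) + (δ / 8) ^ 2 * N / 2 ≤ δ * N / 4 := by nlinarith
  have hstep : δ / 8 * N * (√2 - δ) + (δ / 8) ^ 2 * N / 2 + Real.log 2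
      - δ / 8 * N * √2 * (1 - δ / 4) ≤ -(δ ^ 2 * N / 32) := by nlinarith
  have hsteps := mul_le_mul_of_nonneg_left hstep hT0
  have hTlow : (δ * N / 8 - 1) * (δ ^ 2 * N / 32) ≤ T * (δ ^ 2 * N / 32) := by gcongr
  have hquad : δ * N * 512 ≤ δ * N * (δ ^ 2 * N) := by gcongr
  have hsq : δ ^ 2 * N ≤ δ * N := by nlinarith
  linarith

lemma gaussPi_forall_quadForm_le_sqrt_mul_le {δ : ℝ} (hδ : 0 < δ) (hδ1 : δ ≤ 1) {m N : ℕ}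
    (hn : N ≤ n + m) (hm : 8 * m ≤ δ * N) (hN : 512 ≤ δ ^ 2 * N) :
    gaussPi (Fin n × Fin n) {M | ∀ x, quadForm M x ≤ √N * (√2 - δ) * ‖x‖ ^ 2}
      ≤ ENNReal.ofReal (Real.exp (-(δ ^ 3 / 512) * N ^ 2)) := by
  have hN0 : (0 : ℝ) < N := pos_of_mul_pos_right (by linarith) (sq_nonneg δ)
  have hNN : √N * √N = N := Real.mul_self_sqrt hN0.le
  have hsqrt : √2 < 2 := (Real.sqrt_lt' two_pos).2 (by norm_num)
  set T := ⌊δ * N / 8⌋₊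
  have hT : T ≤ δ * N / 8 := Nat.floor_le (by positivity)
  have hdim : (1 - δ / 4) * √N * ((1 - δ / 4) * √N + δ / 8 * √N * √2) + T ≤ n := by
    have hn' : (N : ℝ) ≤ n + m := by exact_mod_cast hn
    have hfactor : (1 - δ / 4) * (1 - δ / 4 + δ / 8 * √2) ≤ (1 - δ / 4) * 1 := by
      gcongr <;> nlinarith
    calc (1 - δ / 4) * √N * ((1 - δ / 4) * √N + δ / 8 * √N * √2) + T
        = (1 - δ / 4) * (1 - δ / 4 + δ / 8 * √2) * N + T := by
          linear_combination (1 - δ / 4) * (1 - δ / 4 + δ / 8 * √2) * hNN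
      _ ≤ (1 - δ / 4) * 1 * N + δ * N / 8 := by gcongr
      _ ≤ n := by linarith
  refine (gaussPi_forall_quadForm_le_le_exp (by positivity)
    (mul_pos (by linarith) (Real.sqrt_pos.2 hN0)) hdim _).trans ?_
  gcongr
  refine le_trans (le_of_eq ?_)
    (chernoff_exponent_le hδ hδ1 hN (T := T) (Nat.sub_one_lt_floor _).le)
  linear_combination (δ / 8 * (√2 - δ) + (δ / 8) ^ 2 / 2 +
    T * (δ / 8 * (√2 - δ) + (δ / 8) ^ 2 / 2 - δ / 8 * √2 * (1 - δ / 4))) * hNN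

end

/-! ### Hessians of multilinear forms -/

section

variable {ι V : Type*} [DecidableEq ι]

/-- The family with value `v` at `a`, value `w` at `b`, and value `s` at every other index. -/
def slot (s : V) (a b : ι) (v w : V) : ι → V :=
  Function.update (Function.update (fun _ => s) a v) b w

lemma slot_apply (s : V) (a b : ι) (v w : V) (i : ι) :
    slot s a b v w i = if i = b then w else if i = a then v else s := by
  simp only [slot, Function.update_apply]

lemma slot_comm (s : V) {a b : ι} (hab : a ≠ b) (v w : V) : slot s a b v w = slot s b a w v := by
  rw [slot, slot, Function.update_comm hab]

lemma prod_slot {M : Type*} [Fintype ι] [CommMonoid M] {a b : ι} (hab : a ≠ b) (c d : M) :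
    ∏ i, slot c a b d d i = c ^ (Fintype.card ι - 2) * d ^ 2 := by
  have ha : a ∈ Finset.univ \ {b} := by simp [hab]
  rw [slot, Finset.prod_update_of_mem (Finset.mem_univ b), Finset.prod_update_of_mem ha,
    Finset.prod_const, Finset.card_sdiff_of_subset (Finset.singleton_subset_iff.2 ha),
    Finset.card_sdiff_of_subset (Finset.subset_univ _), Finset.card_singleton,
    Finset.card_singleton, Finset.card_univ, Nat.sub_sub, ← mul_assoc, ← sq, mul_comm]

lemma slot_sub_slot [AddGroup V] (s s' v v' : V) (a b : ι) :
    slot s a b v v - slot s' a b v' v' = slot (s - s') a b (v - v') (v - v') := by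
  funext i
  simp only [Pi.sub_apply, slot_apply]
  split_ifs <;> rfl

lemma norm_slot_le [Fintype ι] [SeminormedAddCommGroup V] {s v : V} {r : ℝ} (hs : ‖s‖ ≤ r)
    (hv : ‖v‖ ≤ r) (a b : ι) : ‖slot s a b v v‖ ≤ r := by
  refine (pi_norm_le_iff_of_nonneg ((norm_nonneg s).trans hs)).2 fun i => ?_
  rw [slot_apply]
  split_ifs <;> assumption

end

section

variable {𝕜 ι E F G : Type*} [NontriviallyNormedField 𝕜] [Fintype ι] [DecidableEq ι]
  [NormedAddCommGroup E] [NormedSpace 𝕜 E] [NormedAddCommGroup F] [NormedSpace 𝕜 F]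
  [NormedAddCommGroup G] [NormedSpace 𝕜 G]

/-- The Hessian quadratic form at `s` of the homogeneous polynomial `x ↦ f (x, …, x)`: the
vector `v` is inserted at every ordered pair of distinct positions. -/
def diagHess (f : ContinuousMultilinearMap 𝕜 (fun _ : ι => E) F) (s v : E) : F :=
  ∑ q ∈ Finset.univ.offDiag, f (slot s q.1 q.2 v v)

lemma fderiv_apply_diag (f : ContinuousMultilinearMap 𝕜 (fun _ : ι => E) F) (L : G →L[𝕜] E)
    (x w : G) :
    fderiv 𝕜 (fun x => f fun _ => L x) x w
      = ∑ a, f (Function.update (fun _ => L x) a (L w)) := by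
  rw [(HasFDerivAt.multilinear_comp (f := f) (g := fun _ => L) fun _ => L.hasFDerivAt).fderiv]
  simp

lemma fderiv_fderiv_apply_diag (f : ContinuousMultilinearMap 𝕜 (fun _ : ι => E) F)
    (L : G →L[𝕜] E) (x v : G) :
    fderiv 𝕜 (fun y => fderiv 𝕜 (fun z => f fun _ => L z) y v) x v
      = diagHess f (L x) (L v) := by
  simp only [fderiv_apply_diag]
  have hupdate (a i : ι) : HasFDerivAt (fun y => Function.update (fun _ : ι => L y) a (L v) i)
      (if i = a then 0 else L) x := by
    simp only [Function.update_apply]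
    split_ifs
    exacts [hasFDerivAt_const (L v) x, L.hasFDerivAt]
  rw [(HasFDerivAt.fun_sum fun a _ =>
    HasFDerivAt.multilinear_comp (f := f) (hupdate a)).fderiv, diagHess]
  simp only [sum_apply, ContinuousLinearMap.comp_apply,
    ContinuousMultilinearMap.toContinuousLinearMap_apply]
  rw [← Fintype.sum_prod_type' (f := fun a b => f (Function.update
    (fun i => Function.update (fun _ => L x) a (L v) i) b ((if b = a then 0 else L) v)))]
  symm
  apply Finset.sum_subset_zero_on_sdiff (Finset.subset_univ _)
  · intro q hq
    have hq : q.1 = q.2 := by simpa [Finset.mem_offDiag] using hq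
    rw [hq, if_pos rfl, zero_apply]
    exact f.toMultilinearMap.map_update_zero (Function.update (fun _ => L x) q.2 (L v)) q.2
  · intro q hq
    rw [if_neg (Finset.mem_offDiag.1 hq).2.2.symm]
    rfl

lemma diagHess_const_smul (c : 𝕜) (f : ContinuousMultilinearMap 𝕜 (fun _ : ι => E) F) (s v : E) :
    diagHess (c • f) s v = c • diagHess f s v := by
  simp only [diagHess, smul_apply, Finset.smul_sum]

lemma diagHess_smul_smul (f : ContinuousMultilinearMap 𝕜 (fun _ : ι => E) F) (c d : 𝕜)
    (s v : E) :
    diagHess f (c • s) (d • v) = (c ^ (Fintype.card ι - 2) * d ^ 2) • diagHess f s v := by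
  rw [diagHess, diagHess, Finset.smul_sum]
  refine Finset.sum_congr rfl fun q hq => ?_
  have hab : q.1 ≠ q.2 := (Finset.mem_offDiag.1 hq).2.2
  have hslot : slot (c • s) q.1 q.2 (d • v) (d • v)
      = fun i => slot c q.1 q.2 d d i • slot s q.1 q.2 v v i := by
    funext i
    simp only [slot_apply]
    split_ifs <;> rfl
  rw [hslot, f.map_smul_univ, prod_slot hab]

lemma norm_diagHess_sub_le (f : ContinuousMultilinearMap 𝕜 (fun _ : ι => E) F) {s s' v v' : E}
    {η : ℝ} (hs : ‖s‖ ≤ 1) (hs' : ‖s'‖ ≤ 1) (hv : ‖v‖ ≤ 1) (hv' : ‖v'‖ ≤ 1)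
    (hss : ‖s - s'‖ ≤ η) (hvv : ‖v - v'‖ ≤ η) :
    ‖diagHess f s v - diagHess f s' v'‖ ≤ Fintype.card ι ^ 3 * ‖f‖ * η := by
  have hterm (a b : ι) : ‖f (slot s a b v v) - f (slot s' a b v' v')‖
      ≤ ‖f‖ * Fintype.card ι * 1 * η := by
    refine (f.norm_image_sub_le _ _).trans ?_
    rw [slot_sub_slot]
    gcongr
    · exact pow_le_one₀ (le_max_of_le_left (norm_nonneg _))
        (max_le (norm_slot_le hs hv a b) (norm_slot_le hs' hv' a b))
    · exact norm_slot_le hss hvv a b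
  have hcard : (Finset.univ (α := ι)).offDiag.card ≤ Fintype.card ι ^ 2 := by
    simp [Finset.offDiag_card, sq]
  have hη : 0 ≤ η := (norm_nonneg _).trans hss
  rw [diagHess, diagHess, ← Finset.sum_sub_distrib]
  calc ‖∑ q ∈ Finset.univ.offDiag, (f (slot s q.1 q.2 v v) - f (slot s' q.1 q.2 v' v'))‖
      ≤ (Finset.univ (α := ι)).offDiag.card • (‖f‖ * Fintype.card ι * 1 * η) :=
        (norm_sum_le _ _).trans (Finset.sum_le_card_nsmul _ _ _ fun q _ => hterm q.1 q.2)
    _ ≤ (Fintype.card ι ^ 2 : ℕ) * (‖f‖ * Fintype.card ι * 1 * η) := by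
        rw [nsmul_eq_mul]
        gcongr
    _ = Fintype.card ι ^ 3 * ‖f‖ * η := by push_cast; ring

end

section

variable {ι : Type*} [Fintype ι] [LinearOrder ι]

variable (ι) in
/-- The pairs of distinct positions in increasing order: the unordered pairs over which the
Hessian of a symmetric form is summed. -/
def ltPairs : Finset (ι × ι) := Finset.univ.filter fun q => q.1 < q.2

lemma mem_ltPairs {q : ι × ι} : q ∈ ltPairs ι ↔ q.1 < q.2 := by
  simp [ltPairs]

lemma sum_offDiag_eq_two_nsmul {M : Type*} [AddCommMonoid M] {f : ι × ι → M}
    (hf : ∀ q ∈ Finset.univ.offDiag, f q.swap = f q) :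
    ∑ q ∈ Finset.univ.offDiag, f q = 2 • ∑ q ∈ ltPairs ι, f q := by
  have hlt : Finset.univ.offDiag.filter (fun q : ι × ι => q.1 < q.2) = ltPairs ι := by
    ext q
    simpa [mem_ltPairs] using ne_of_lt
  rw [← Finset.sum_filter_add_sum_filter_not _ fun q : ι × ι => q.1 < q.2, hlt, two_nsmul]
  congr 1
  refine Finset.sum_nbij' Prod.swap Prod.swap ?_ ?_ (fun _ _ => rfl) (fun _ _ => rfl) ?_
  · intro q hq
    simp only [Finset.mem_filter, Finset.mem_offDiag, Finset.mem_univ, true_and, not_lt] at hq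
    exact mem_ltPairs.2 (hq.2.lt_of_ne hq.1.symm)
  · intro q hq
    have hq := mem_ltPairs.1 hq
    simpa using ⟨hq.ne', hq.le⟩
  · exact fun q hq => (hf q (Finset.mem_filter.1 hq).1).symm

variable (ι) in
lemma two_mul_card_ltPairs :
    2 * ((ltPairs ι).card : ℝ) = Fintype.card ι * (Fintype.card ι - 1) := by
  have h := sum_offDiag_eq_two_nsmul (ι := ι) (f := fun _ => (1 : ℝ)) fun _ _ => rfl
  rw [Finset.sum_const, Finset.sum_const, Finset.offDiag_card, Finset.card_univ,
    ← smul_assoc, nsmul_one, nsmul_one, Nat.cast_sub (Nat.le_mul_self _)] at h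
  push_cast [smul_eq_mul] at h
  rw [← h]
  ring

variable (ι) in
lemma card_ltPairs_pos [Nontrivial ι] : (0 : ℝ) < (ltPairs ι).card := by
  obtain ⟨a, b, hab⟩ := exists_pair_lt ι
  exact_mod_cast Finset.card_pos.2 ⟨(a, b), mem_ltPairs.2 hab⟩

lemma exists_mem_pair_notMem_pair {q r : ι × ι} (hq : q ∈ ltPairs ι) (hr : r ∈ ltPairs ι)
    (hqr : q ≠ r) : ∃ c, (c = q.1 ∨ c = q.2) ∧ c ≠ r.1 ∧ c ≠ r.2 := by
  rw [mem_ltPairs] at hq hr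
  by_contra! h
  have h1 := or_iff_not_imp_left.2 (h q.1 (.inl rfl))
  have h2 := or_iff_not_imp_left.2 (h q.2 (.inr rfl))
  apply hqr
  ext <;> rcases h1 with h1 | h1 <;> rcases h2 with h2 | h2 <;> order

variable {𝕜 E F : Type*} [NontriviallyNormedField 𝕜] [NormedAddCommGroup E] [NormedSpace 𝕜 E]
  [NormedAddCommGroup F] [NormedSpace 𝕜 F]

lemma diagHess_eq_two_nsmul (f : ContinuousMultilinearMap 𝕜 (fun _ : ι => E) F) (s v : E) :
    diagHess f s v = 2 • ∑ q ∈ ltPairs ι, f (slot s q.1 q.2 v v) :=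
  sum_offDiag_eq_two_nsmul fun q hq => by
    rw [Prod.fst_swap, Prod.snd_swap, slot_comm s (Finset.mem_offDiag.1 hq).2.2]

end

lemma map_slot_sum_smul {R ι κ M M' : Type*} [CommSemiring R] [DecidableEq ι] [Fintype κ]
    [AddCommMonoid M] [Module R M] [AddCommMonoid M'] [Module R M']
    (f : MultilinearMap R (fun _ : ι => M) M') (s : M) {a b : ι} (hab : a ≠ b)
    (y : κ → R) (e : κ → M) :
    f (slot s a b (∑ i, y i • e i) (∑ i, y i • e i))
      = ∑ q : κ × κ, (y q.1 * y q.2) • f (slot s a b (e q.1) (e q.2)) := by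
  rw [slot, f.map_update_sum, Fintype.sum_prod_type_right]
  refine Finset.sum_congr rfl fun j _ => ?_
  rw [Function.update_comm hab, f.map_update_sum]
  refine Finset.sum_congr rfl fun i _ => ?_
  rw [f.map_update_smul, Function.update_comm hab.symm, f.map_update_smul, smul_smul, slot]

section

variable {ι κ : Type*} [Fintype ι]

/-- The tensor product of a family of vectors of `ℝ^κ` indexed by `ι`, in coordinates:
the entry at `j : ι → κ` is `∏ c, x c (j c)`. -/
def pureTensor :
    ContinuousMultilinearMap ℝ (fun _ : ι => EuclideanSpace ℝ κ) (EuclideanSpace ℝ (ι → κ)) :=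
  (EuclideanSpace.equiv (ι → κ) ℝ).symm.toContinuousLinearMap.compContinuousMultilinearMap
    (ContinuousMultilinearMap.pi fun j =>
      (ContinuousMultilinearMap.mkPiAlgebra ℝ ι ℝ).compContinuousLinearMap
        fun c => EuclideanSpace.proj (j c))

lemma pureTensor_apply (x : ι → EuclideanSpace ℝ κ) (j : ι → κ) :
    pureTensor x j = ∏ c, x c (j c) := by
  simp [pureTensor]

variable [DecidableEq ι] [Fintype κ]

lemma inner_pureTensor (x y : ι → EuclideanSpace ℝ κ) :
    inner ℝ (pureTensor x) (pureTensor y) = ∏ c, inner ℝ (x c) (y c) := by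
  simp only [PiLp.inner_apply, pureTensor_apply, RCLike.inner_apply, conj_trivial]
  rw [Finset.prod_univ_sum, Fintype.piFinset_univ]
  simp only [Finset.prod_mul_distrib]

lemma norm_pureTensor (x : ι → EuclideanSpace ℝ κ) : ‖pureTensor x‖ = ∏ c, ‖x c‖ := by
  rw [← sq_eq_sq₀ (norm_nonneg _) (Finset.prod_nonneg fun _ _ => norm_nonneg _),
    ← real_inner_self_eq_norm_sq, inner_pureTensor, ← Finset.prod_pow]
  simp only [real_inner_self_eq_norm_sq]

/-- The multilinear form `x ↦ ⟨g, x₁ ⊗ ⋯ ⊗ xₚ⟩` of a tensor `g`. -/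
def tensorForm (g : (ι → κ) → ℝ) :
    ContinuousMultilinearMap ℝ (fun _ : ι => EuclideanSpace ℝ κ) ℝ :=
  (innerSL ℝ (WithLp.toLp 2 g)).compContinuousMultilinearMap pureTensor

lemma tensorForm_apply (g : (ι → κ) → ℝ) (x : ι → EuclideanSpace ℝ κ) :
    tensorForm g x = inner ℝ (pureTensor x) (WithLp.toLp 2 g) := by
  simp [tensorForm, real_inner_comm]

lemma norm_tensorForm_le (g : (ι → κ) → ℝ) : ‖tensorForm g‖ ≤ ‖WithLp.toLp 2 g‖ := by
  refine ContinuousMultilinearMap.opNorm_le_bound (norm_nonneg _) fun x => ?_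
  rw [tensorForm_apply, ← norm_pureTensor, mul_comm]
  exact norm_inner_le_norm _ _

lemma inner_pureTensor_slot_self {s : EuclideanSpace ℝ κ} (hs : ‖s‖ = 1)
    {a b : ι} (hab : a ≠ b) (v w v' w' : EuclideanSpace ℝ κ) :
    inner ℝ (pureTensor (slot s a b v w)) (pureTensor (slot s a b v' w'))
      = inner ℝ v v' * inner ℝ w w' := by
  rw [inner_pureTensor, Fintype.prod_eq_mul a b hab]
  · simp only [slot_apply, if_neg hab, if_true]
  · rintro c ⟨hca, hcb⟩
    simp only [slot_apply, if_neg hca, if_neg hcb, real_inner_self_eq_norm_sq, hs, one_pow]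

end

section

variable {ι κ n : Type*} [Fintype ι] [LinearOrder ι] [Fintype κ]

lemma inner_pureTensor_slot_of_ne {s v w : EuclideanSpace ℝ κ} (hv : inner ℝ s v = 0)
    (hw : inner ℝ s w = 0) {q r : ι × ι} (hq : q ∈ ltPairs ι) (hr : r ∈ ltPairs ι) (hqr : q ≠ r)
    (v' w' : EuclideanSpace ℝ κ) :
    inner ℝ (pureTensor (slot s r.1 r.2 v' w')) (pureTensor (slot s q.1 q.2 v w)) = 0 := by
  obtain ⟨c, hc, hc1, hc2⟩ := exists_mem_pair_notMem_pair hq hr hqr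
  rw [inner_pureTensor]
  refine Finset.prod_eq_zero (Finset.mem_univ c) ?_
  simp only [slot_apply, if_neg hc1, if_neg hc2]
  split_ifs with h2 h1
  exacts [hw, hv, (hc.elim h1 h2).elim]

/-- The tensors whose inner products with `g` are the normalized matrix entries of the Hessian of
`tensorForm g` at `s`, compressed to the span of the family `e`. -/
def hessCoeff (ι : Type*) [Fintype ι] [LinearOrder ι] (s : EuclideanSpace ℝ κ)
    (e : n → EuclideanSpace ℝ κ) (q : n × n) : EuclideanSpace ℝ (ι → κ) :=
  (√((ltPairs ι).card : ℝ))⁻¹ • ∑ r ∈ ltPairs ι, pureTensor (slot s r.1 r.2 (e q.1) (e q.2))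

lemma inner_hessCoeff [Nontrivial ι] {s : EuclideanSpace ℝ κ} (hs : ‖s‖ = 1)
    {e : n → EuclideanSpace ℝ κ} (hes : ∀ i, inner ℝ s (e i) = 0) (q q' : n × n) :
    inner ℝ (hessCoeff ι s e q) (hessCoeff ι s e q')
      = inner ℝ (e q.1) (e q'.1) * inner ℝ (e q.2) (e q'.2) := by
  have hcard := card_ltPairs_pos ι
  have hrow (r : ι × ι) (hr : r ∈ ltPairs ι) :
      ∑ r' ∈ ltPairs ι, inner ℝ (pureTensor (slot s r.1 r.2 (e q.1) (e q.2)))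
        (pureTensor (slot s r'.1 r'.2 (e q'.1) (e q'.2)))
      = inner ℝ (e q.1) (e q'.1) * inner ℝ (e q.2) (e q'.2) := by
    rw [Finset.sum_eq_single_of_mem r hr fun r' hr' hne =>
      inner_pureTensor_slot_of_ne (hes _) (hes _) hr' hr hne _ _,
      inner_pureTensor_slot_self hs (mem_ltPairs.1 hr).ne]
  rw [hessCoeff, hessCoeff, real_inner_smul_left, real_inner_smul_right, sum_inner]
  simp only [inner_sum]
  rw [Finset.sum_congr rfl hrow, Finset.sum_const, nsmul_eq_mul, ← mul_assoc, ← mul_assoc,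
    ← mul_inv, Real.mul_self_sqrt hcard.le, inv_mul_cancel₀ hcard.ne', one_mul]

lemma orthonormal_hessCoeff [Nontrivial ι] {s : EuclideanSpace ℝ κ} (hs : ‖s‖ = 1)
    {e : n → EuclideanSpace ℝ κ} (he : Orthonormal ℝ e) (hes : ∀ i, inner ℝ s (e i) = 0) :
    Orthonormal ℝ (hessCoeff ι s e) := by
  classical
  rw [orthonormal_iff_ite] at he ⊢
  intro q q'
  rw [inner_hessCoeff hs hes, he, he, ite_zero_mul_ite_zero, one_mul]
  simp only [Prod.ext_iff]

lemma diagHess_tensorForm_sum_smul [Nontrivial ι] [Fintype n] (g : (ι → κ) → ℝ)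
    (s : EuclideanSpace ℝ κ) (e : n → EuclideanSpace ℝ κ) (y : EuclideanSpace ℝ n) :
    diagHess (tensorForm g) s (∑ i, y i • e i)
      = 2 * √((ltPairs ι).card : ℝ) *
        quadForm (fun q => inner ℝ (hessCoeff ι s e q) (WithLp.toLp 2 g)) y := by
  have hcard := (Real.sqrt_pos.2 (card_ltPairs_pos ι)).ne'
  have hexpand (r : ι × ι) (hr : r ∈ ltPairs ι) :=
    map_slot_sum_smul (tensorForm g).toMultilinearMap s (mem_ltPairs.1 hr).ne y e
  rw [diagHess_eq_two_nsmul, quadForm_eq_sum, two_nsmul, ← two_mul, mul_assoc]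
  refine congrArg (2 * ·) ((Finset.sum_congr rfl hexpand).trans ?_)
  rw [Finset.sum_comm, Finset.mul_sum]
  refine Finset.sum_congr rfl fun q _ => ?_
  rw [← Finset.smul_sum, hessCoeff, real_inner_smul_left, sum_inner]
  simp only [ContinuousMultilinearMap.coe_coe, tensorForm_apply, smul_eq_mul]
  field_simp

end

/-! ### Nets of orthonormal frames -/

section

variable {E : Type*} [NormedAddCommGroup E] [NormedSpace ℝ E] [FiniteDimensional ℝ E]

lemma card_le_of_isSeparated_of_norm_le_one {r : ℝ≥0} (hr : 0 < r) {T : Finset E}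
    (hT : ∀ x ∈ T, ‖x‖ ≤ 1) (hsep : Metric.IsSeparated r (T : Set E)) :
    (T.card : ℝ) ≤ (1 + 2 / r) ^ Module.finrank ℝ E := by
  borelize E
  let μ : Measure E := Measure.addHaar
  have hr2 : (0 : ℝ) < r / 2 := by positivity
  have hρ : (0 : ℝ) < 1 + r / 2 := by positivity
  have hdisj : (T : Set E).PairwiseDisjoint fun c => Metric.ball c (r / 2 : ℝ) := by
    intro c hc d hd hcd
    have h : (r : ℝ) < dist c d := by
      have h : (r : ℝ≥0∞) < edist c d := hsep hc hd hcd
      rw [edist_nndist, ENNReal.coe_lt_coe] at h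
      exact_mod_cast h
    exact Metric.ball_disjoint_ball (by linarith)
  have hsubset : ⋃ c ∈ T, Metric.ball c (r / 2 : ℝ) ⊆ Metric.ball (0 : E) (1 + r / 2) := by
    refine Set.iUnion₂_subset fun c hc => Metric.ball_subset_ball' ?_
    rw [dist_zero_right]
    linarith [hT c hc]
  have hvol := measure_mono (μ := μ) hsubset
  rw [measure_biUnion_finset hdisj fun _ _ => measurableSet_ball] at hvol
  simp only [μ.addHaar_ball_of_pos _ hr2, μ.addHaar_ball_of_pos _ hρ, Finset.sum_const,
    nsmul_eq_mul, ← mul_assoc] at hvol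
  have hcard := ENNReal.toReal_le_of_le_ofReal (by positivity)
    ((ENNReal.mul_le_mul_iff_left (Metric.measure_ball_pos μ 0 zero_lt_one).ne'
      measure_ball_lt_top.ne).1 hvol)
  rw [ENNReal.toReal_mul, ENNReal.toReal_natCast, ENNReal.toReal_ofReal (by positivity),
    ← le_div_iff₀ (by positivity), ← div_pow] at hcard
  rwa [add_div, div_self hr2.ne', one_div_div, add_comm] at hcard

lemma packingNumber_le_of_subset_closedBall {r : ℝ≥0} (hr : 0 < r) {S : Set E}
    (hS : S ⊆ Metric.closedBall 0 1) :
    Metric.packingNumber r S ≤ (⌊(1 + 2 / (r : ℝ)) ^ Module.finrank ℝ E⌋₊ : ℕ∞) := by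
  refine iSup₂_le fun C hC => iSup_le fun hsep => ?_
  by_contra! hlt
  obtain ⟨T, hTC, hT⟩ := Set.exists_subset_encard_eq (Order.add_one_le_of_lt hlt)
  lift T to Finset E using Set.finite_of_encard_eq_coe hT
  rw [Set.encard_coe_eq_coe_finsetCard] at hT
  have hcard := card_le_of_isSeparated_of_norm_le_one hr
    (fun x hx => mem_closedBall_zero_iff.1 (hS (hC (hTC hx)))) (hsep.subset hTC)
  have hfloor := Nat.le_floor hcard
  have hT' : T.card = ⌊(1 + 2 / (r : ℝ)) ^ Module.finrank ℝ E⌋₊ + 1 := by exact_mod_cast hT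
  omega

lemma exists_finset_card_le_forall_exists_dist_le {r : ℝ≥0} (hr : 0 < r) {S : Set E}
    (hS : S ⊆ Metric.closedBall 0 1) :
    ∃ F : Finset E, ↑F ⊆ S ∧ (F.card : ℝ) ≤ (1 + 2 / r) ^ Module.finrank ℝ E ∧
      ∀ x ∈ S, ∃ y ∈ F, ‖x - y‖ ≤ r := by
  have hpack := packingNumber_le_of_subset_closedBall hr hS
  have htop := (hpack.trans_lt (ENat.natCast_lt_top _)).ne
  obtain ⟨F, hF⟩ : ∃ F : Finset E, ↑F = Metric.maximalSeparatedSet r S :=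
    (Set.finite_of_encard_le_coe
      ((Metric.encard_maximalSeparatedSet htop).trans_le hpack)).exists_finset_coe
  refine ⟨F, hF ▸ Metric.maximalSeparatedSet_subset, ?_, fun x hx => ?_⟩
  · exact card_le_of_isSeparated_of_norm_le_one hr
      (fun x hx => mem_closedBall_zero_iff.1
        (hS (Metric.maximalSeparatedSet_subset (hF ▸ Finset.mem_coe.2 hx))))
      (hF ▸ Metric.isSeparated_maximalSeparatedSet)
  · obtain ⟨y, hy, hxy⟩ := Metric.isCover_maximalSeparatedSet htop hx
    refine ⟨y, Finset.mem_coe.1 (hF ▸ hy), ?_⟩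
    change edist x y ≤ r at hxy
    rw [edist_nndist, ENNReal.coe_le_coe] at hxy
    rw [← dist_eq_norm]
    exact_mod_cast hxy

end

section

variable {J E : Type*} [NormedAddCommGroup E] [InnerProductSpace ℝ E]

lemma mem_orthogonal_span_range_iff {u : J → E} {v : E} :
    v ∈ (Submodule.span ℝ (Set.range u))ᗮ ↔ ∀ i, inner ℝ (u i) v = 0 := by
  rw [← Submodule.span_singleton_le_iff_mem, ← Submodule.isOrtho_iff_le,
    Submodule.isOrtho_span]
  simp [real_inner_comm]

variable [Fintype J]

lemma exists_mem_orthogonal_span_norm_sub_le {u u' : J → E} (hu : Orthonormal ℝ u) {r : ℝ}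
    (huu : ‖u - u'‖ ≤ r) {v' : E} (hv' : v' ∈ (Submodule.span ℝ (Set.range u'))ᗮ) :
    ∃ v ∈ (Submodule.span ℝ (Set.range u))ᗮ,
      ‖v‖ ≤ ‖v'‖ ∧ ‖v - v'‖ ≤ Fintype.card J * r * ‖v'‖ := by
  classical
  set w := ∑ i, inner ℝ (u i) v' • u i with hw
  have hortho : v' - w ∈ (Submodule.span ℝ (Set.range u))ᗮ :=
    mem_orthogonal_span_range_iff.2 fun i => by
      rw [inner_sub_right, hw, hu.inner_right_fintype, sub_self]
  have hwv : inner ℝ w (v' - w) = 0 :=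
    (Submodule.mem_orthogonal _ _).1 hortho w
      (Submodule.sum_mem _ fun i _ => Submodule.smul_mem _ _ (Submodule.subset_span ⟨i, rfl⟩))
  refine ⟨v' - w, hortho, ?_, ?_⟩
  · have hpyth := norm_add_sq_eq_norm_sq_add_norm_sq_of_inner_eq_zero w (v' - w) hwv
    rw [add_sub_cancel] at hpyth
    nlinarith [norm_nonneg v', norm_nonneg (v' - w), mul_self_nonneg ‖w‖]
  · have hterm (i : J) : ‖inner ℝ (u i) v' • u i‖ ≤ r * ‖v'‖ := by
      have hzero := mem_orthogonal_span_range_iff.1 hv' i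
      rw [norm_smul, hu.norm_eq_one, mul_one, ← sub_zero (inner ℝ (u i) v'), ← hzero,
        ← inner_sub_left]
      exact (norm_inner_le_norm _ _).trans
        (mul_le_mul_of_nonneg_right ((norm_le_pi_norm (u - u') i).trans huu) (norm_nonneg _))
    rw [sub_sub_cancel_left, norm_neg, mul_assoc, ← nsmul_eq_mul, ← Finset.card_univ]
    exact (norm_sum_le _ _).trans (Finset.sum_le_card_nsmul _ _ _ fun i _ => hterm i)

end

section

variable {J ι κ : Type*} [Fintype ι] [Fintype κ]

/-- The tensors `g` whose form has Hessian at most `t` at the point `f i₀`, on the orthogonal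
complement of the family `f`. -/
def hessLESet (ι : Type*) [Fintype ι] [DecidableEq ι] (t : ℝ) (f : J → EuclideanSpace ℝ κ)
    (i₀ : J) : Set ((ι → κ) → ℝ) :=
  {g | ∀ v ∈ (Submodule.span ℝ (Set.range f))ᗮ, diagHess (tensorForm g) (f i₀) v ≤ t * ‖v‖ ^ 2}

lemma hessLESet_mono [DecidableEq ι] {t t' : ℝ} (h : t ≤ t') (f : J → EuclideanSpace ℝ κ)
    (i₀ : J) : hessLESet ι t f i₀ ⊆ hessLESet ι t' f i₀ :=
  fun _ hg v hv => (hg v hv).trans (mul_le_mul_of_nonneg_right h (sq_nonneg _))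

variable [Fintype J]

lemma gaussPi_hessLESet_le [LinearOrder ι] [Nontrivial ι] {δ : ℝ} (hδ : 0 < δ) (hδ1 : δ ≤ 1)
    (hm : 8 * Fintype.card J ≤ δ * Fintype.card κ) (hN : 512 ≤ δ ^ 2 * Fintype.card κ)
    {f : J → EuclideanSpace ℝ κ} {i₀ : J} (hf : ‖f i₀‖ = 1) :
    gaussPi (ι → κ) (hessLESet ι
        (2 * √((ltPairs ι).card : ℝ) * (√(Fintype.card κ) * (√2 - δ))) f i₀)
      ≤ ENNReal.ofReal (Real.exp (-(δ ^ 3 / 512) * (Fintype.card κ : ℝ) ^ 2)) := by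
  set K := (Submodule.span ℝ (Set.range f))ᗮ with hK
  have hdim : Fintype.card κ ≤ Module.finrank ℝ K + Fintype.card J := by
    have hsum := (Submodule.span ℝ (Set.range f)).finrank_add_finrank_orthogonal
    rw [← hK, finrank_euclideanSpace] at hsum
    have hrange := finrank_range_le_card (R := ℝ) f
    rw [Set.finrank] at hrange
    omega
  let B := stdOrthonormalBasis ℝ K
  let e : Fin (Module.finrank ℝ K) → EuclideanSpace ℝ κ := fun i => B i
  have he : Orthonormal ℝ e := B.orthonormal.comp_linearIsometry K.subtypeₗᵢ
  have hes (i) : inner ℝ (f i₀) (e i) = 0 :=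
    mem_orthogonal_span_range_iff.1 (B i).2 i₀
  have hmap := map_inner_gaussPi_of_orthonormal (orthonormal_hessCoeff (ι := ι) hf he hes)
  refine le_trans ?_ (gaussPi_forall_quadForm_le_sqrt_mul_le hδ hδ1 hdim hm hN)
  rw [← hmap]
  refine le_trans (measure_mono fun g hg => ?_) (Measure.le_map_apply (by fun_prop) _)
  intro y
  have hquad := hg (∑ i, y i • e i) (Submodule.sum_mem _ fun i _ => K.smul_mem _ (B i).2)
  have hnorm : ‖∑ i, y i • e i‖ ^ 2 = ‖y‖ ^ 2 := by
    rw [EuclideanSpace.real_norm_sq_eq y, ← real_inner_self_eq_norm_sq, he.inner_sum]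
    simp [sq]
  rw [diagHess_tensorForm_sum_smul, hnorm, mul_assoc _ _ (‖y‖ ^ 2)] at hquad
  exact le_of_mul_le_mul_left hquad (mul_pos two_pos (Real.sqrt_pos.2 (card_ltPairs_pos ι)))

variable [DecidableEq ι]

lemma mem_hessLESet_of_norm_sub_le {t r : ℝ} (ht : 0 ≤ t) {f f' : J → EuclideanSpace ℝ κ}
    (hf : Orthonormal ℝ f) (hf' : Orthonormal ℝ f') (hff : ‖f - f'‖ ≤ r) {i₀ : J}
    {g : (ι → κ) → ℝ} (hg : g ∈ hessLESet ι t f i₀) :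
    g ∈ hessLESet ι (t + Fintype.card ι ^ 3 * ‖WithLp.toLp 2 g‖ * (Fintype.card J * r)) f' i₀ := by
  have hr : 0 ≤ r := (norm_nonneg _).trans hff
  have hJ : (1 : ℝ) ≤ Fintype.card J := Nat.one_le_cast.2 (Fintype.card_pos_iff.2 ⟨i₀⟩)
  have hunit (v' : EuclideanSpace ℝ κ) (hv' : v' ∈ (Submodule.span ℝ (Set.range f'))ᗮ)
      (hnorm : ‖v'‖ = 1) : diagHess (tensorForm g) (f' i₀) v'
        ≤ t + Fintype.card ι ^ 3 * ‖WithLp.toLp 2 g‖ * (Fintype.card J * r) := by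
    obtain ⟨v, hv, hvle, hvv⟩ := exists_mem_orthogonal_span_norm_sub_le hf hff hv'
    rw [hnorm] at hvle
    rw [hnorm, mul_one, norm_sub_rev] at hvv
    have hpoint : ‖f' i₀ - f i₀‖ ≤ Fintype.card J * r := by
      rw [norm_sub_rev]
      exact (norm_le_pi_norm (f - f') i₀).trans (hff.trans (le_mul_of_one_le_left hr hJ))
    have hclose := norm_diagHess_sub_le (tensorForm g) (hf'.norm_eq_one i₀).le
      (hf.norm_eq_one i₀).le hnorm.le hvle hpoint hvv
    have hnear : diagHess (tensorForm g) (f i₀) v ≤ t := (hg v hv).trans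
      (mul_le_of_le_one_right ht (pow_le_one₀ (norm_nonneg v) hvle))
    have hop : Fintype.card ι ^ 3 * ‖tensorForm g‖ * (Fintype.card J * r)
        ≤ Fintype.card ι ^ 3 * ‖WithLp.toLp 2 g‖ * (Fintype.card J * r) := by
      gcongr
      exact norm_tensorForm_le g
    linarith [(abs_le.1 hclose).2]
  intro v' hv'
  rcases eq_or_ne v' 0 with rfl | h0
  · have hzero : diagHess (tensorForm g) (f' i₀) 0 = 0 := by
      simpa using diagHess_smul_smul (tensorForm g) 1 0 (f' i₀) 0
    simp [hzero]
  · have hpos : 0 < ‖v'‖ := norm_pos_iff.2 h0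
    have hscale := diagHess_smul_smul (tensorForm g) 1 ‖v'‖ (f' i₀) (‖v'‖⁻¹ • v')
    rw [one_smul, smul_inv_smul₀ hpos.ne', one_pow, one_mul, smul_eq_mul] at hscale
    rw [hscale, mul_comm]
    gcongr
    exact hunit _ (Submodule.smul_mem _ _ hv') (norm_smul_inv_norm h0)

lemma gaussPi_exists_orthonormal_mem_hessLESet_le {t R : ℝ} {r : ℝ≥0} (ht : 0 ≤ t) (hr : 0 < r)
    (i₀ : J) {B : ℝ≥0∞}
    (hB : ∀ f : J → EuclideanSpace ℝ κ, Orthonormal ℝ f →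
      gaussPi (ι → κ)
        (hessLESet ι (t + Fintype.card ι ^ 3 * R * (Fintype.card J * r)) f i₀) ≤ B) :
    gaussPi (ι → κ) {g | ‖WithLp.toLp 2 g‖ ≤ R ∧
        ∃ f : J → EuclideanSpace ℝ κ, Orthonormal ℝ f ∧ g ∈ hessLESet ι t f i₀}
      ≤ ENNReal.ofReal ((1 + 2 / r) ^ (Fintype.card J * Fintype.card κ)) * B := by
  obtain ⟨F, hF, hcard, hnet⟩ := exists_finset_card_le_forall_exists_dist_le hr
    (S := {f : J → EuclideanSpace ℝ κ | Orthonormal ℝ f}) fun f hf =>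
      mem_closedBall_zero_iff.2 ((pi_norm_le_iff_of_nonneg zero_le_one).2 fun i =>
        (hf.norm_eq_one i).le)
  rw [Module.finrank_pi_fintype] at hcard
  simp only [finrank_euclideanSpace, Finset.sum_const, Finset.card_univ, smul_eq_mul] at hcard
  have hcover : {g : (ι → κ) → ℝ | ‖WithLp.toLp 2 g‖ ≤ R ∧
        ∃ f : J → EuclideanSpace ℝ κ, Orthonormal ℝ f ∧ g ∈ hessLESet ι t f i₀}
      ⊆ ⋃ f ∈ F, hessLESet ι (t + Fintype.card ι ^ 3 * R * (Fintype.card J * r)) f i₀ := by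
    rintro g ⟨hgR, f, hf, hg⟩
    obtain ⟨f', hf', hff⟩ := hnet f hf
    refine Set.mem_biUnion hf' fun v hv =>
      (mem_hessLESet_of_norm_sub_le ht hf (hF hf') hff hg v hv).trans ?_
    gcongr
  calc _ ≤ ∑ f ∈ F, gaussPi (ι → κ)
          (hessLESet ι (t + Fintype.card ι ^ 3 * R * (Fintype.card J * r)) f i₀) :=
        (measure_mono hcover).trans (measure_biUnion_finset_le F _)
    _ ≤ F.card • B := Finset.sum_le_card_nsmul _ _ _ fun f hf => hB f (hF hf)
    _ ≤ _ := by
        rw [nsmul_eq_mul, ← ENNReal.ofReal_natCast]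
        gcongr

end

lemma eventually_one_add_two_mul_pow_pow_mul_exp_le {c : ℝ} (hc : 0 < c) (a b : ℕ) :
    ∀ᶠ N : ℕ in atTop, (1 + 2 * (N : ℝ) ^ a) ^ (b * N) * Real.exp (-c * (N : ℝ) ^ 2)
      ≤ Real.exp (-(c / 2) * (N : ℝ) ^ 2) := by
  have hc' : 0 < c / (2 * (b + 1)) := by positivity
  have hpoly := tendsto_natCast_atTop_atTop.eventually
    ((isLittleO_pow_exp_pos_mul_atTop a hc').bound (by norm_num : (0 : ℝ) < 1 / 3))
  filter_upwards [hpoly, eventually_ge_atTop 1] with N hN hN1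
  have hpow : (1 : ℝ) ≤ (N : ℝ) ^ a := one_le_pow₀ (Nat.one_le_cast.2 hN1)
  rw [Real.norm_of_nonneg (by positivity), Real.norm_of_nonneg (Real.exp_pos _).le] at hN
  calc (1 + 2 * (N : ℝ) ^ a) ^ (b * N) * Real.exp (-c * (N : ℝ) ^ 2)
      ≤ Real.exp (c / (2 * (b + 1)) * N) ^ (b * N) * Real.exp (-c * (N : ℝ) ^ 2) := by
        gcongr
        linarith
    _ = Real.exp (c / 2 * (b / (b + 1)) * (N : ℝ) ^ 2 - c * (N : ℝ) ^ 2) := by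
        rw [← Real.exp_nat_mul, ← Real.exp_add]
        push_cast
        congr 1
        field_simp
        ring
    _ ≤ Real.exp (-(c / 2) * (N : ℝ) ^ 2) := by
        have hb : (b : ℝ) / (b + 1) ≤ 1 := (div_le_one (by positivity)).2 (by linarith)
        have hmul := mul_le_mul_of_nonneg_right
          (mul_le_mul_of_nonneg_left hb (half_pos hc).le) (sq_nonneg (N : ℝ))
        exact Real.exp_le_exp.2 (by linarith)

lemma eventually_two_mul_exp_le {c : ℝ} (hc : 0 < c) :
    ∀ᶠ N : ℕ in atTop, 2 * Real.exp (-c * (N : ℝ) ^ 2) ≤ Real.exp (-(c / 2) * (N : ℝ) ^ 2) := by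
  have hexp := eventually_one_add_two_mul_pow_pow_mul_exp_le hc 0 1
  filter_upwards [hexp, eventually_ge_atTop 1] with N hN hN1
  refine le_trans ?_ hN
  gcongr
  calc (2 : ℝ) ≤ 1 + 2 * (N : ℝ) ^ 0 := by norm_num
    _ ≤ (1 + 2 * (N : ℝ) ^ 0) ^ (1 * N) := le_self_pow₀ (by norm_num) (by omega)

section

variable {J ι κ : Type*} [Fintype ι] [Fintype κ]

variable [LinearOrder ι] [Nontrivial ι] [Finite J]

lemma eventually_gaussPi_norm_le_exists_orthonormal_le (i₀ : J) {δ : ℝ} (hδ : 0 < δ)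
    (hδ1 : δ ≤ 1 / 2) :
    ∀ᶠ N : ℕ in atTop, gaussPi (ι → Fin N) {g |
        ‖WithLp.toLp 2 g‖ ≤ 2 * √((N : ℝ) ^ Fintype.card ι) ∧
        ∃ f : J → EuclideanSpace ℝ (Fin N), Orthonormal ℝ f ∧
          g ∈ hessLESet ι (2 * √((ltPairs ι).card : ℝ) * (√N * (√2 - 2 * δ))) f i₀}
      ≤ ENNReal.ofReal (Real.exp (-(δ ^ 3 / 1024) * (N : ℝ) ^ 2)) := by
  have := Fintype.ofFinite J
  have hcard := Real.sqrt_pos.2 (card_ltPairs_pos ι)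
  have hlarge {a : ℝ} (ha : 0 < a) (b : ℝ) : ∀ᶠ N : ℕ in atTop, b ≤ a * N :=
    (tendsto_natCast_atTop_atTop.const_mul_atTop ha).eventually_ge_atTop b
  have hsqrt : ∀ᶠ N : ℕ in atTop, (Fintype.card ι : ℝ) ^ 3 * 2 * Fintype.card J
      ≤ 2 * √((ltPairs ι).card : ℝ) * δ * √N :=
    ((Real.tendsto_sqrt_atTop.comp tendsto_natCast_atTop_atTop).const_mul_atTop
      (by positivity)).eventually_ge_atTop _
  have hnet := eventually_one_add_two_mul_pow_pow_mul_exp_le (c := δ ^ 3 / 512) (by positivity)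
    (Fintype.card ι) (Fintype.card J)
  rw [div_div, show (512 * 2 : ℝ) = 1024 by norm_num] at hnet
  filter_upwards [hlarge hδ (8 * Fintype.card J), hlarge (sq_pos_of_pos hδ) 512, hsqrt, hnet,
    eventually_ge_atTop 1] with N hm hN hsqrt hnet hN1
  have hD : (1 : ℝ) ≤ (N : ℝ) ^ Fintype.card ι := one_le_pow₀ (Nat.one_le_cast.2 hN1)
  have ht : 0 ≤ 2 * √((ltPairs ι).card : ℝ) * (√N * (√2 - 2 * δ)) := by
    have h2 : 1 ≤ √2 := Real.one_le_sqrt.2 one_le_two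
    have : 0 ≤ √2 - 2 * δ := by linarith
    positivity
  let r : ℝ≥0 := ((N : ℝ≥0) ^ Fintype.card ι)⁻¹
  have hr : (r : ℝ) = ((N : ℝ) ^ Fintype.card ι)⁻¹ := by simp [r]
  have hRr : 2 * √((N : ℝ) ^ Fintype.card ι) * r ≤ 2 := by
    rw [hr, mul_inv_le_iff₀ (by positivity)]
    gcongr
    exact Real.sqrt_le_self_iff.2 (.inr hD)
  refine (gaussPi_exists_orthonormal_mem_hessLESet_le ht (r := r) (by positivity) i₀
    fun f hf => (measure_mono (hessLESet_mono ?_ f i₀)).trans (gaussPi_hessLESet_le hδ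
      (by linarith) (by simpa using hm) (by simpa using hN) (hf.norm_eq_one i₀))).trans ?_
  · rw [Fintype.card_fin]
    have := mul_le_mul_of_nonneg_left hRr
      (by positivity : 0 ≤ (Fintype.card ι : ℝ) ^ 3 * Fintype.card J)
    linarith
  · rw [← ENNReal.ofReal_mul (by positivity), hr, div_inv_eq_mul, Fintype.card_fin]
    exact ENNReal.ofReal_le_ofReal hnet

lemma eventually_gaussPi_exists_orthonormal_le (i₀ : J) {δ : ℝ} (hδ : 0 < δ)
    (hδ1 : δ ≤ 1 / 2) :
    ∀ᶠ N : ℕ in atTop, gaussPi (ι → Fin N) {g |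
        ∃ f : J → EuclideanSpace ℝ (Fin N), Orthonormal ℝ f ∧
          g ∈ hessLESet ι (2 * √((ltPairs ι).card : ℝ) * (√N * (√2 - 2 * δ))) f i₀}
      ≤ ENNReal.ofReal (Real.exp (-(δ ^ 3 / 2048) * (N : ℝ) ^ 2)) := by
  have htwo := eventually_two_mul_exp_le (c := δ ^ 3 / 1024) (by positivity)
  rw [div_div, show (1024 * 2 : ℝ) = 2048 by norm_num] at htwo
  have hδ3 : δ ^ 3 ≤ 1 := pow_le_one₀ hδ.le (by linarith)
  filter_upwards [eventually_gaussPi_norm_le_exists_orthonormal_le (ι := ι) i₀ hδ hδ1,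
    htwo, eventually_ge_atTop 1] with N hbdd htwo hN1
  set A := {g : (ι → Fin N) → ℝ | ∃ f : J → EuclideanSpace ℝ (Fin N), Orthonormal ℝ f ∧
    g ∈ hessLESet ι (2 * √((ltPairs ι).card : ℝ) * (√N * (√2 - 2 * δ))) f i₀}
  have htail : gaussPi (ι → Fin N) {g | 2 * √((N : ℝ) ^ Fintype.card ι) < ‖WithLp.toLp 2 g‖}
      ≤ ENNReal.ofReal (Real.exp (-(δ ^ 3 / 1024) * (N : ℝ) ^ 2)) := by
    have hpow : (N : ℝ) ^ 2 ≤ (N : ℝ) ^ Fintype.card ι :=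
      pow_le_pow_right₀ (Nat.one_le_cast.2 hN1) Fintype.one_lt_card
    have hnorm := gaussPi_lt_norm_le (ι := ι → Fin N)
    simp only [Fintype.card_fun, Fintype.card_fin, Nat.cast_pow] at hnorm
    refine hnorm.trans (ENNReal.ofReal_le_ofReal (Real.exp_le_exp.2 ?_))
    nlinarith [sq_nonneg (N : ℝ)]
  calc gaussPi (ι → Fin N) A
      ≤ gaussPi (ι → Fin N) ({g | 2 * √((N : ℝ) ^ Fintype.card ι) < ‖WithLp.toLp 2 g‖} ∪
          {g | ‖WithLp.toLp 2 g‖ ≤ 2 * √((N : ℝ) ^ Fintype.card ι) ∧ g ∈ A}) :=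
        measure_mono fun g hg =>
          (lt_or_ge _ ‖WithLp.toLp 2 g‖).imp_right fun hle => ⟨hle, hg⟩
    _ ≤ _ := (measure_union_le _ _).trans (add_le_add htail hbdd)
    _ ≤ _ := by
      rw [← ENNReal.ofReal_add (Real.exp_pos _).le (Real.exp_pos _).le, ← two_mul]
      exact ENNReal.ofReal_le_ofReal htwo

end

/-! ### The pure p-spin model -/

lemma StdGaussianCouplings.measure_mem_le {Ω : Type*} [MeasureSpace Ω] {N P k : ℕ}
    {G : Ω → (k : ℕ) → (Fin k → Fin N) → ℝ} (hG : StdGaussianCouplings N P G)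
    (hk : k ∈ Finset.Icc 2 P) (T : Set ((Fin k → Fin N) → ℝ)) :
    ℙ {ω | G ω k ∈ T} ≤ gaussPi (Fin k → Fin N) T := by
  have hae : AEMeasurable (fun ω => flatten N P (G ω)) (ℙ : Measure Ω) :=
    AEMeasurable.of_map_ne_zero (by rw [hG]; exact IsProbabilityMeasure.ne_zero _)
  let e (j : Fin k → Fin N) : GIdx N P := ⟨⟨k, hk⟩, j⟩
  have he : Function.Injective e := fun i j h => by simpa [e] using h
  have hcomp : AEMeasurable (fun x : GIdx N P → ℝ => x ∘ e)
      (Measure.map (fun ω => flatten N P (G ω)) ℙ) :=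
    (measurable_pi_lambda _ fun j => measurable_pi_apply _).aemeasurable
  refine (Measure.le_map_apply (hcomp.comp_aemeasurable hae) T).trans_eq ?_
  rw [← AEMeasurable.map_map_of_aemeasurable hcomp hae, hG,
    map_comp_gaussPi_of_injective he]

section

variable {N P : ℕ} {c : ℕ → ℝ} {g : (k : ℕ) → (Fin k → Fin N) → ℝ} {σ : Fin N → ℝ}

lemma exists_submodule_of_le_critIndex {d : ℕ} (h : d ≤ critIndex N P c g σ) :
    ∃ W : Submodule ℝ (Fin N → ℝ), Module.finrank ℝ W = d ∧ (∀ v ∈ W, dotp v σ = 0) ∧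
      ∀ v ∈ W, hessH N P c g σ v v ≤ dotp (gradH N P c g σ) σ / N * ∑ i, (v i) ^ 2 := by
  obtain ⟨W, hW, htan, hneg⟩ := Nat.sSup_mem (s := {d : ℕ | ∃ W : Submodule ℝ (Fin N → ℝ),
    Module.finrank ℝ W = d ∧ (∀ v ∈ W, dotp v σ = 0) ∧ ∀ v ∈ W, v ≠ 0 →
      hessH N P c g σ v v - (dotp (gradH N P c g σ) σ / N) * ∑ i, (v i) ^ 2 < 0})
    ⟨0, ⊥, finrank_bot ℝ _, by simp [dotp], by simp⟩
    ⟨N, by rintro _ ⟨W, rfl, -⟩; simpa using W.finrank_le⟩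
  obtain ⟨u, hu⟩ := exists_linearIndependent_of_le_finrank (h.trans hW.ge)
  have huW : Submodule.span ℝ (Set.range (Subtype.val ∘ u)) ≤ W :=
    Submodule.span_le.2 (Set.range_subset_iff.2 fun i => (u i).2)
  refine ⟨_, ?_, fun v hv => htan v (huW hv), fun v hv => ?_⟩
  · exact (finrank_span_eq_card (hu.map' W.subtype W.ker_subtype)).trans (Fintype.card_fin d)
  · rcases eq_or_ne v 0 with rfl | h0
    · simp [hessH]
    · exact (sub_neg.1 (hneg v (huW hv) h0)).le

lemma dotp_gradH (w : Fin N → ℝ) :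
    dotp (gradH N P c g σ) w = fderiv ℝ (hamiltonian N P c g) σ w := by
  conv_rhs => rw [pi_eq_sum_univ' w, map_sum]
  simp [dotp, gradH, mul_comm]

variable {p : ℕ} (hp : 2 ≤ p)
include hp

lemma hamiltonian_pureC :
    hamiltonian N p (pureC p) g = fun σ => ((N : ℝ) ^ (-(((p : ℝ) - 1) / 2)) • tensorForm (g p))
      fun _ => (EuclideanSpace.equiv (Fin N) ℝ).symm.toContinuousLinearMap σ := by
  funext σ
  rw [hamiltonian, Finset.sum_eq_single_of_mem p (Finset.mem_Icc.2 ⟨hp, le_rfl⟩)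
    fun k _ hk => by simp [pureC, hk]]
  simp [pureC, tensorForm_apply, PiLp.inner_apply, pureTensor_apply]

lemma dotp_gradH_pureC :
    dotp (gradH N p (pureC p) g σ) σ = p * hamiltonian N p (pureC p) g σ := by
  rw [dotp_gradH, hamiltonian_pureC hp, fderiv_apply_diag]
  simp

lemma hessH_pureC (v : Fin N → ℝ) :
    hessH N p (pureC p) g σ v v = (N : ℝ) ^ (-(((p : ℝ) - 1) / 2)) *
      diagHess (tensorForm (g p)) (WithLp.toLp 2 σ) (WithLp.toLp 2 v) := by
  rw [hessH, hamiltonian_pureC hp, fderiv_fderiv_apply_diag, diagHess_const_smul, smul_eq_mul]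
  rfl

end

section

variable {p : ℕ}

lemma mul_THRp (hp : p ≠ 0) : (p : ℝ) * THRp p = 2 * √((ltPairs (Fin p)).card : ℝ) * √2 := by
  have hpos : (0 : ℝ) < p := Nat.cast_pos.2 hp.bot_lt
  have hpairs : (ltPairs (Fin p)).card * 2 = (p : ℝ) ^ 2 * (((p : ℝ) - 1) / p) := by
    rw [mul_comm, two_mul_card_ltPairs, Fintype.card_fin]
    field_simp
  rw [mul_assoc, ← Real.sqrt_mul (Nat.cast_nonneg _), hpairs, Real.sqrt_mul (sq_nonneg _),
    Real.sqrt_sq hpos.le, THRp]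
  ring

lemma mul_THRp_sub_le (hp : p ≠ 0) {ε δ : ℝ} (hδ : 0 ≤ δ) (hδε : 4 * δ ≤ ε) :
    (p : ℝ) * (THRp p - ε) ≤ 2 * √((ltPairs (Fin p)).card : ℝ) * (√2 - 2 * δ) := by
  have hpairs : √((ltPairs (Fin p)).card : ℝ) ≤ p := by
    rw [Real.sqrt_le_left (Nat.cast_nonneg p)]
    have h := two_mul_card_ltPairs (Fin p)
    rw [Fintype.card_fin] at h
    nlinarith [(Nat.cast_nonneg p : (0 : ℝ) ≤ p)]
  rw [mul_sub, mul_sub, mul_THRp hp]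
  nlinarith [mul_le_mul_of_nonneg_left hpairs hδ,
    mul_le_mul_of_nonneg_left hδε (Nat.cast_nonneg p : (0 : ℝ) ≤ p)]

end

lemma exists_orthonormal_orthogonal_span_eq {J E : Type*} [Fintype J] [NormedAddCommGroup E]
    [InnerProductSpace ℝ E] [FiniteDimensional ℝ E] {W : Submodule ℝ E}
    (hW : Module.finrank ℝ W + Fintype.card J = Module.finrank ℝ E) {s : E} (hs : ‖s‖ = 1)
    (hsW : s ∈ Wᗮ) (i₀ : J) :
    ∃ f : J → E, Orthonormal ℝ f ∧ f i₀ = s ∧ (Submodule.span ℝ (Set.range f))ᗮ = W := by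
  have hcard : Module.finrank ℝ Wᗮ = Fintype.card J := by
    have hsum := W.finrank_add_finrank_orthogonal
    omega
  obtain ⟨b, hb⟩ := Orthonormal.exists_orthonormalBasis_extension_of_card_eq hcard
    (v := fun _ : J => (⟨s, hsW⟩ : Wᗮ)) (s := {i₀})
    ⟨fun _ => hs, fun i j hij => (hij (Subsingleton.elim i j)).elim⟩
  refine ⟨fun i => b i, b.orthonormal.comp_linearIsometry Wᗮ.subtypeₗᵢ,
    congrArg Subtype.val (hb i₀ rfl), ?_⟩
  have hspan : Submodule.span ℝ (Set.range fun i => (b i : E)) = Wᗮ := by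
    have hrange : (Set.range fun i => (b i : E)) = Wᗮ.subtype '' Set.range b :=
      Set.range_comp _ _
    rw [hrange, Submodule.span_image, ← b.coe_toBasis, b.toBasis.span_eq, Submodule.map_top,
      Submodule.range_subtype]
  rw [hspan, Submodule.orthogonal_orthogonal]

lemma sqrt_pow_mul_rpow {p : ℕ} (hp : 2 ≤ p) {x : ℝ} (hx : 0 < x) :
    x ^ (-(((p : ℝ) - 1) / 2)) * √x ^ (p - 2) = (√x)⁻¹ := by
  rw [Real.sqrt_eq_rpow, ← Real.rpow_natCast, ← Real.rpow_mul hx.le,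
    ← Real.rpow_add hx, ← Real.rpow_neg hx.le, Nat.cast_sub hp]
  congr 1
  push_cast
  ring

section

variable {N p : ℕ} {g : (k : ℕ) → (Fin k → Fin N) → ℝ} {σ : Fin N → ℝ}

lemma norm_inv_sqrt_smul_of_mem_sphereSet (hN : 0 < N) (hσ : σ ∈ sphereSet N) :
    ‖(√(N : ℝ))⁻¹ • WithLp.toLp 2 σ‖ = 1 := by
  have hnorm : ‖WithLp.toLp 2 σ‖ = √N := by
    rw [EuclideanSpace.norm_eq]
    simp only [Real.norm_eq_abs, sq_abs]
    rw [hσ]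
  rw [norm_smul, hnorm, norm_inv, Real.norm_of_nonneg (Real.sqrt_nonneg _),
    inv_mul_cancel₀ (Real.sqrt_pos.2 (Nat.cast_pos.2 hN)).ne']

lemma diagHess_inv_sqrt_smul_le (hp : 2 ≤ p) (hN : 0 < N) {η : ℝ} {v : Fin N → ℝ}
    (hH : hamiltonian N p (pureC p) g σ ≤ N * η)
    (hv : hessH N p (pureC p) g σ v v
      ≤ dotp (gradH N p (pureC p) g σ) σ / N * ∑ i, (v i) ^ 2) :
    diagHess (tensorForm (g p)) ((√(N : ℝ))⁻¹ • WithLp.toLp 2 σ) (WithLp.toLp 2 v)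
      ≤ √N * (p * η) * ‖WithLp.toLp 2 v‖ ^ 2 := by
  have hN' : (0 : ℝ) < N := Nat.cast_pos.2 hN
  have hsqrt := Real.sqrt_pos.2 hN'
  have hscale := diagHess_smul_smul (tensorForm (g p)) √N 1
    ((√(N : ℝ))⁻¹ • WithLp.toLp 2 σ) (WithLp.toLp 2 v)
  rw [smul_inv_smul₀ hsqrt.ne', one_smul, one_pow, mul_one, Fintype.card_fin, smul_eq_mul]
    at hscale
  rw [hessH_pureC hp, hscale, ← mul_assoc, sqrt_pow_mul_rpow hp hN', dotp_gradH_pureC hp,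
    inv_mul_le_iff₀ hsqrt] at hv
  rw [EuclideanSpace.real_norm_sq_eq, mul_assoc]
  refine hv.trans ?_
  gcongr
  rw [mul_div_assoc]
  gcongr
  rwa [div_le_iff₀' hN']

lemma exists_orthonormal_mem_hessLESet {k : ℕ} (hp : 2 ≤ p) (hN : k < N) {η : ℝ}
    (hσ : σ ∈ sphereSet N) (hidx : N - 1 - k ≤ critIndex N p (pureC p) g σ)
    (hH : hamiltonian N p (pureC p) g σ ≤ N * η) :
    ∃ f : Fin (k + 1) → EuclideanSpace ℝ (Fin N), Orthonormal ℝ f ∧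
      g p ∈ hessLESet (Fin p) (√N * (p * η)) f 0 := by
  obtain ⟨W, hW, htan, hneg⟩ := exists_submodule_of_le_critIndex hidx
  let L := (WithLp.linearEquiv 2 ℝ (Fin N → ℝ)).symm
  have hfinrank : Module.finrank ℝ (W.map L.toLinearMap) + Fintype.card (Fin (k + 1))
      = Module.finrank ℝ (EuclideanSpace ℝ (Fin N)) := by
    rw [LinearEquiv.finrank_map_eq, hW, Fintype.card_fin, finrank_euclideanSpace_fin]
    omega
  have horth : (√(N : ℝ))⁻¹ • WithLp.toLp 2 σ ∈ (W.map L.toLinearMap)ᗮ := by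
    refine Submodule.smul_mem _ _ ?_
    rintro _ ⟨v, hv, rfl⟩
    simpa [L, PiLp.inner_apply, dotp, mul_comm] using htan v hv
  obtain ⟨f, hf, hf0, hspan⟩ := exists_orthonormal_orthogonal_span_eq hfinrank
    (norm_inv_sqrt_smul_of_mem_sphereSet (by omega) hσ) horth 0
  refine ⟨f, hf, fun v hv => ?_⟩
  rw [hspan] at hv
  obtain ⟨v, hv, rfl⟩ := hv
  rw [hf0]
  exact diagHess_inv_sqrt_smul_le hp (by omega) hH (hneg v hv)

end

theorem statement_9_general {Ω : Type*} [MeasureSpace Ω] (p : ℕ) (hp : 2 ≤ p)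
    (G : (N : ℕ) → Ω → (k : ℕ) → (Fin k → Fin N) → ℝ)
    (hG : ∀ N, 1 ≤ N → StdGaussianCouplings N p (G N))
    (k : ℕ) (ε : ℝ) (hε : 0 < ε) :
    ∃ ck > (0 : ℝ), ∃ N₀ : ℕ, ∀ N ≥ N₀,
      ℙ {ω | ∃ σ ∈ sphereSet N, N - 1 - k ≤ critIndex N p (pureC p) (G N ω) σ
          ∧ hamiltonian N p (pureC p) (G N ω) σ ≤ (N : ℝ) * (THRp p - ε)}
        ≤ ENNReal.ofReal (Real.exp (-ck * (N : ℝ) ^ 2)) := by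
  have hp0 : p ≠ 0 := by omega
  have : Nontrivial (Fin p) := Fin.nontrivial_iff_two_le.2 hp
  obtain ⟨δ, hδ, hδ2, hδε⟩ : ∃ δ : ℝ, 0 < δ ∧ δ ≤ 1 / 2 ∧ 4 * δ ≤ ε :=
    ⟨min (1 / 2) (ε / 4), by positivity, min_le_left _ _,
      by linarith [min_le_right (1 / 2) (ε / 4)]⟩
  refine ⟨δ ^ 3 / 2048, by positivity, eventually_atTop.1 ?_⟩
  filter_upwards [eventually_gaussPi_exists_orthonormal_le (ι := Fin p) (0 : Fin (k + 1)) hδ hδ2,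
    eventually_gt_atTop k] with N hgauss hN
  refine (measure_mono ?_).trans (((hG N (by omega)).measure_mem_le
    (Finset.mem_Icc.2 ⟨hp, le_rfl⟩) _).trans hgauss)
  rintro ω ⟨σ, hσ, hidx, hH⟩
  obtain ⟨f, hf, hmem⟩ := exists_orthonormal_mem_hessLESet hp hN hσ hidx hH
  refine ⟨f, hf, hessLESet_mono ?_ f 0 hmem⟩
  rw [mul_left_comm (2 * _)]
  exact mul_le_mul_of_nonneg_left (mul_THRp_sub_le hp0 hδ.le hδε) (Real.sqrt_nonneg _)

/-- in the pure p-spin spherical model, for every fixed `k` and `ε > 0`, with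
probability at least `1 - exp(-c_k N)` there is no critical point of index `N-1-k` at energy
below `N(THR - ε)`. -/
theorem statement_9 {Ω : Type*} [MeasureSpace Ω] [IsProbabilityMeasure (ℙ : Measure Ω)]
    (p : ℕ) (hp : 3 ≤ p)
    (G : (N : ℕ) → Ω → (k : ℕ) → (Fin k → Fin N) → ℝ)
    (hG : ∀ N, 1 ≤ N → StdGaussianCouplings N p (G N))
    (k : ℕ) (ε : ℝ) (hε : 0 < ε) :
    ∃ ck > (0 : ℝ), ∃ N₀ : ℕ, ∀ N ≥ N₀,
      ℙ {ω | ∃ σ : Fin N → ℝ, IsCritPt N p (pureC p) (G N ω) σ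
          ∧ critIndex N p (pureC p) (G N ω) σ = N - 1 - k
          ∧ hamiltonian N p (pureC p) (G N ω) σ ≤ (N : ℝ) * (THRp p - ε)}
        ≤ ENNReal.ofReal (Real.exp (-ck * N)) := by
  obtain ⟨ck, hck, N₀, h⟩ := statement_9_general p (by omega) G hG k ε hε
  refine ⟨ck, hck, N₀, fun N hN => (measure_mono ?_).trans ((h N hN).trans ?_)⟩
  · exact fun ω ⟨σ, hσ, hidx, hH⟩ => ⟨σ, hσ.1, hidx.ge, hH⟩
  · have hsq : (N : ℝ) ≤ (N : ℝ) ^ 2 := by exact_mod_cast Nat.le_self_pow two_ne_zero N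
    exact ENNReal.ofReal_le_ofReal (Real.exp_le_exp.2 (by nlinarith))
end
end

section
/- Fix q ∈ [0,1) and for each N ≥ 1 let m_N ∈ ℝ^N satisfy ‖m_N‖₂² = N q. Then lim_{δ→0⁺} limsup_{N→∞} (1/N) log μ_N( Band(m_N, δ) ) = lim_{δ→0⁺} liminf_{N→∞} (1/N) log μ_N( Band(m_N, δ) ) = ½ log(1 − q). -/
open MeasureTheory ProbabilityTheory Filter
open scoped ENNReal NNReal

noncomputable section

/-!
A radial measure, such as the standard Gaussian, sees directions through normalised surface
measure. After rescaling by `1 / √N`, so that `v = m / √N` has `‖v‖² = q`, the measure of the band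
is therefore the proportion of the unit ball lying in the cone over the rescaled band, and both
bounds compare volumes of balls.

Upper bound: a point of this cone with norm in `(1 - δ, 1]` lies within `√(1 - q + 4δ)` of `v`, and
this shell carries the proportion `1 - (1 - δ) ^ N` of the cone.

Lower bound: if `y` is a point of the unit ball close to its boundary and almost orthogonal to `v`,
then `v + √(1 - q) y` has norm almost `1` and direction in the band. All but an exponentially small
part of the ball consists of such `y`: the points with `η ≤ ⟪y, v⟫` lie within `√(1 - η²) < 1` of
`ηv`, and similarly on the opposite side.
-/

open Metric Module
open scoped Topology RealInnerProductSpace Pointwise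

section ConeMeasure

variable {E : Type*} [NormedAddCommGroup E] [NormedSpace ℝ E] [MeasurableSpace E]

/-- The normalised cone measure of `μ` on the unit sphere of `E`: the `μ`-proportion of the unit
ball lying in the cone over a set of directions. It is carried by the unit sphere, but is a measure
on `E`. For Lebesgue measure on a Euclidean space it is the uniform measure on the unit sphere. -/
def coneMeasure (μ : Measure E) : Measure E :=
  (μ.toSphere Set.univ)⁻¹ • μ.toSphere.map (↑)

lemma coneMeasure_apply (μ : Measure E) {s : Set E} (hs : MeasurableSet s) :
    coneMeasure μ s = (μ.toSphere Set.univ)⁻¹ * μ.toSphere ((↑) ⁻¹' s) := by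
  rw [coneMeasure, Measure.smul_apply, smul_eq_mul, Measure.map_apply measurable_subtype_coe hs]

lemma measurable_normalize [BorelSpace E] [SecondCountableTopology E] :
    Measurable (NormedSpace.normalize : E → E) :=
  measurable_norm.inv.smul measurable_id

variable [BorelSpace E] [FiniteDimensional ℝ E] (μ : Measure E) [μ.IsAddHaarMeasure] [Nontrivial E]

lemma toSphere_univ_inv_mul_cancel : (μ.toSphere Set.univ)⁻¹ * μ.toSphere Set.univ = 1 :=
  ENNReal.inv_mul_cancel (Measure.measure_univ_ne_zero.2 μ.toSphere_ne_zero) (measure_ne_top _ _)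

lemma setLIntegral_normalize_preimage_fun_norm {f : ℝ → ℝ≥0∞} (hf : Measurable f) {s : Set E}
    (hs : MeasurableSet s) :
    ∫⁻ x in NormedSpace.normalize ⁻¹' s, f ‖x‖ ∂μ =
      μ.toSphere ((↑) ⁻¹' s) *
        ∫⁻ r : Set.Ioi (0 : ℝ), f r ∂Measure.volumeIoiPow (finrank ℝ E - 1) := by
  have hpolar (x : ({0}ᶜ : Set E)) :
      (NormedSpace.normalize ⁻¹' s).indicator (fun x ↦ f ‖x‖) x =
        s.indicator 1 ((homeomorphUnitSphereProd E x).1 : E) *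
          f (homeomorphUnitSphereProd E x).2 := by
    rw [homeomorphUnitSphereProd_apply_fst_coe, homeomorphUnitSphereProd_apply_snd_coe,
      ← NormedSpace.normalize]
    by_cases hx : NormedSpace.normalize (x : E) ∈ s <;> simp [hx]
  calc
    _ = ∫⁻ x : ({0}ᶜ : Set E), (NormedSpace.normalize ⁻¹' s).indicator (fun x ↦ f ‖x‖) x
          ∂μ.comap (↑) := by
      rw [lintegral_subtype_comap (measurableSet_singleton _).compl, restrict_compl_singleton,
        lintegral_indicator (measurable_normalize hs)]
    _ = ∫⁻ p, s.indicator 1 (p.1 : E) * f p.2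
          ∂μ.toSphere.prod (.volumeIoiPow (finrank ℝ E - 1)) := by
      simp only [hpolar]
      exact μ.measurePreserving_homeomorphUnitSphereProd.lintegral_comp_emb
        (Homeomorph.measurableEmbedding _) fun p ↦ s.indicator 1 (p.1 : E) * f p.2
    _ = _ := by
      rw [lintegral_prod_mul (f := fun u : sphere (0 : E) 1 ↦ s.indicator 1 (u : E))
        (g := fun r : Set.Ioi (0 : ℝ) ↦ f r)
        ((measurable_one.indicator hs).comp measurable_subtype_coe).aemeasurable
        (hf.comp measurable_subtype_coe).aemeasurable]
      congr 1
      exact lintegral_indicator_one (measurable_subtype_coe hs)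

lemma setLIntegral_normalize_preimage_fun_norm_eq_coneMeasure_mul {f : ℝ → ℝ≥0∞}
    (hf : Measurable f) {s : Set E} (hs : MeasurableSet s) :
    ∫⁻ x in NormedSpace.normalize ⁻¹' s, f ‖x‖ ∂μ = coneMeasure μ s * ∫⁻ x, f ‖x‖ ∂μ := by
  have htotal := setLIntegral_normalize_preimage_fun_norm μ hf .univ
  rw [Set.preimage_univ, setLIntegral_univ, Set.preimage_univ] at htotal
  rw [setLIntegral_normalize_preimage_fun_norm μ hf hs, htotal, coneMeasure_apply μ hs,
    mul_mul_mul_comm, toSphere_univ_inv_mul_cancel, one_mul]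

lemma map_normalize_withDensity_fun_norm {f : ℝ → ℝ≥0∞} (hf : Measurable f)
    (hf1 : ∫⁻ x, f ‖x‖ ∂μ = 1) :
    (μ.withDensity fun x ↦ f ‖x‖).map NormedSpace.normalize = coneMeasure μ := by
  ext s hs
  rw [Measure.map_apply measurable_normalize hs,
    withDensity_apply _ (measurable_normalize hs),
    setLIntegral_normalize_preimage_fun_norm_eq_coneMeasure_mul μ hf hs, hf1, mul_one]

lemma measureReal_closedBall_inter_normalize_preimage {s : Set E} (hs : MeasurableSet s) (r : ℝ) :
    μ.real (closedBall 0 r ∩ NormedSpace.normalize ⁻¹' s) =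
      (coneMeasure μ).real s * μ.real (closedBall 0 r) := by
  have h := setLIntegral_normalize_preimage_fun_norm_eq_coneMeasure_mul μ
    (measurable_one.indicator measurableSet_Iic : Measurable ((Set.Iic r).indicator 1)) hs
  have hball (x : E) : (Set.Iic r).indicator (1 : ℝ → ℝ≥0∞) ‖x‖ =
      (closedBall 0 r).indicator 1 x := by
    simp [Set.indicator]
  simp only [hball, lintegral_indicator_one isClosed_closedBall.measurableSet,
    Measure.restrict_apply isClosed_closedBall.measurableSet] at h
  simp only [Measure.real, h, ENNReal.toReal_mul]

end ConeMeasure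

section Gaussian

variable {E : Type*} [NormedAddCommGroup E] [InnerProductSpace ℝ E] [FiniteDimensional ℝ E]
  [MeasurableSpace E] [BorelSpace E]

lemma stdGaussian_eq_withDensity :
    stdGaussian E = volume.withDensity fun x : E ↦
      ENNReal.ofReal
        (((2 * Real.pi) ^ (finrank ℝ E / 2 : ℝ))⁻¹ * Real.exp (-(1 / 2) * ‖x‖ ^ 2)) := by
  have hint : Integrable fun x : E ↦ Real.exp (-(1 / 2) * ‖x‖ ^ 2) := by
    refine .of_integral_ne_zero ?_
    rw [GaussianFourier.integral_rexp_neg_mul_sq_norm (by norm_num)]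
    positivity
  have := isFiniteMeasure_withDensity_ofReal
    (hint.const_mul ((2 * Real.pi) ^ (finrank ℝ E / 2 : ℝ))⁻¹).hasFiniteIntegral
  refine Measure.ext_of_charFun (funext fun t ↦ ?_)
  rw [charFun_stdGaussian, charFun_apply, integral_withDensity_eq_integral_toReal_smul
    (by fun_prop) (by simp)]
  have hfourier :=
    GaussianFourier.integral_cexp_neg_mul_sq_norm_add (b := 1 / 2) (by simp) Complex.I t
  have hconst : (((2 * Real.pi) ^ (finrank ℝ E / 2 : ℝ) : ℝ) : ℂ) =
      (Real.pi / (1 / 2) : ℂ) ^ (finrank ℝ E / 2 : ℂ) := by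
    rw [Complex.ofReal_cpow (by positivity)]
    push_cast
    ring_nf
  calc
    _ = (((2 * Real.pi) ^ (finrank ℝ E / 2 : ℝ) : ℝ) : ℂ)⁻¹ *
          ∫ x : E, Complex.exp (-(1 / 2) * ‖x‖ ^ 2 + Complex.I * ⟪t, x⟫) := by
      rw [hfourier, hconst, inv_mul_cancel_left₀]
      · congr 1
        norm_num [Complex.I_sq]
      · rw [← hconst]; exact_mod_cast (by positivity)
    _ = _ := by
      rw [← integral_const_mul]
      refine integral_congr_ae (.of_forall fun x ↦ ?_)
      simp only
      rw [ENNReal.toReal_ofReal (by positivity), Complex.exp_add, Complex.real_smul,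
        real_inner_comm, mul_comm Complex.I]
      push_cast
      ring

lemma map_normalize_stdGaussian [Nontrivial E] :
    (stdGaussian E).map NormedSpace.normalize = coneMeasure volume := by
  have hdensity := stdGaussian_eq_withDensity (E := E)
  rw [hdensity]
  refine map_normalize_withDensity_fun_norm volume
    (f := fun r ↦ ENNReal.ofReal
      (((2 * Real.pi) ^ (finrank ℝ E / 2 : ℝ))⁻¹ * Real.exp (-(1 / 2) * r ^ 2))) (by fun_prop) ?_
  simpa using (congrArg (fun μ ↦ μ Set.univ) hdensity).symm

end Gaussian

section UnitBand

variable {E : Type*} [NormedAddCommGroup E] [InnerProductSpace ℝ E]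

/-- The band `Band(m, δ)` in the coordinates `u = σ / √N`, `v = m / √N` that turn `S_N` into the
unit sphere. -/
def unitBand (v : E) (δ : ℝ) : Set E := {u | ‖u‖ = 1 ∧ |⟪u - v, v⟫| < δ}

lemma measurableSet_unitBand [MeasurableSpace E] [BorelSpace E] (v : E) (δ : ℝ) :
    MeasurableSet (unitBand v δ) :=
  (measurableSet_eq_fun measurable_norm measurable_const).inter
    (measurableSet_lt (f := fun u : E ↦ |⟪u - v, v⟫|) (by fun_prop) measurable_const)

end UnitBand

section SphereUniform

lemma sphereUniform_eq_map_coneMeasure (N : ℕ) [NeZero N] :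
    sphereUniform N = (coneMeasure (volume : Measure (EuclideanSpace ℝ (Fin N)))).map
      fun u ↦ WithLp.ofLp (√N • u) := by
  rw [← map_normalize_stdGaussian, ← map_pi_eq_stdGaussian,
    Measure.map_map measurable_normalize (by fun_prop), Measure.map_map (by fun_prop)
      (measurable_normalize.comp (by fun_prop)), sphereUniform]
  congr 1
  ext g i
  simp only [WithLp.ofLp_smul, Function.comp_apply, NormedSpace.normalize,
    EuclideanSpace.norm_eq, Real.norm_eq_abs, sq_abs, Pi.smul_apply, smul_eq_mul]
  ring

lemma ofLp_smul_mem_band_iff {N : ℕ} [NeZero N] {m : Fin N → ℝ} {δ : ℝ}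
    {u : EuclideanSpace ℝ (Fin N)} :
    WithLp.ofLp (√N • u) ∈ band N m δ ↔
      u ∈ unitBand ((√N)⁻¹ • WithLp.toLp 2 m) δ := by
  have hN : (0 : ℝ) < N := by exact_mod_cast NeZero.pos N
  have hsphere : WithLp.ofLp (√N • u) ∈ sphereSet N ↔ ‖u‖ = 1 := by
    rw [← sq_eq_sq₀ (norm_nonneg u) zero_le_one, EuclideanSpace.real_norm_sq_eq]
    simp [sphereSet, mul_pow, ← Finset.mul_sum, hN.ne']
  have hoverlap : dotp (WithLp.ofLp (√N • u) - m) m =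
      N * ⟪u - (√N)⁻¹ • WithLp.toLp 2 m, (√N)⁻¹ • WithLp.toLp 2 m⟫ := by
    simp only [dotp, PiLp.inner_apply, Finset.mul_sum]
    refine Finset.sum_congr rfl fun i _ ↦ ?_
    simp only [WithLp.ofLp_smul, Pi.sub_apply, Pi.smul_apply, smul_eq_mul, PiLp.sub_apply,
      PiLp.smul_apply, RCLike.inner_apply, Real.ringHom_apply]
    field_simp
    rw [Real.sq_sqrt hN.le]
    ring
  rw [band, unitBand, Set.mem_ofPred_eq, Set.mem_ofPred_eq, hsphere, hoverlap, abs_mul,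
    abs_of_pos hN, mul_lt_mul_iff_right₀ hN]

lemma measurableSet_band (N : ℕ) (m : Fin N → ℝ) (δ : ℝ) : MeasurableSet (band N m δ) := by
  unfold band sphereSet dotp
  measurability

lemma measureReal_sphereUniform_band (N : ℕ) [NeZero N] (m : Fin N → ℝ) (δ : ℝ) :
    (sphereUniform N).real (band N m δ) =
      (coneMeasure (volume : Measure (EuclideanSpace ℝ (Fin N)))).real
        (unitBand ((√N)⁻¹ • WithLp.toLp 2 m) δ) := by
  rw [sphereUniform_eq_map_coneMeasure,
    map_measureReal_apply (by fun_prop) (measurableSet_band N m δ)]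
  congr 1
  ext u
  exact ofLp_smul_mem_band_iff

end SphereUniform

section BandGeometry

variable {E : Type*} [NormedAddCommGroup E] [InnerProductSpace ℝ E] {v : E}

lemma inner_normalize_sub_self {x : E} (hx : x ≠ 0) (v : E) :
    ⟪NormedSpace.normalize x - v, v⟫ = (⟪x, v⟫ - ‖x‖ * ‖v‖ ^ 2) / ‖x‖ := by
  rw [NormedSpace.normalize, inner_sub_left, real_inner_smul_left, real_inner_self_eq_norm_sq]
  have := norm_ne_zero_iff.2 hx
  field_simp

lemma closedBall_inter_normalize_preimage_unitBand_subset (hv : ‖v‖ ≤ 1) (δ : ℝ) :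
    closedBall 0 1 ∩ NormedSpace.normalize ⁻¹' unitBand v δ ⊆
      closedBall 0 (1 - δ) ∩ NormedSpace.normalize ⁻¹' unitBand v δ ∪
        closedBall v √(1 - ‖v‖ ^ 2 + 4 * δ) := by
  rintro x ⟨hx_le, hcone⟩
  refine or_iff_not_imp_left.2 fun hx ↦ ?_
  replace hx : 1 - δ < ‖x‖ := by
    by_contra! hinner
    exact hx ⟨mem_closedBall_zero_iff.2 hinner, hcone⟩
  obtain ⟨hunit, hband⟩ := hcone
  have hx0 : x ≠ 0 := NormedSpace.norm_normalize_eq_one_iff.1 hunit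
  have hδ : 0 < δ := (abs_nonneg _).trans_lt hband
  have hv2 : ‖v‖ ^ 2 ≤ 1 := pow_le_one₀ (norm_nonneg v) hv
  rw [mem_closedBall_zero_iff] at hx_le
  rw [inner_normalize_sub_self hx0, abs_div, abs_norm, div_lt_iff₀ (norm_pos_iff.2 hx0)] at hband
  rw [mem_closedBall, dist_eq_norm]
  refine Real.le_sqrt_of_sq_le ?_
  calc ‖x - v‖ ^ 2 = ‖x‖ ^ 2 - 2 * ⟪x, v⟫ + ‖v‖ ^ 2 := norm_sub_sq_real x v
    _ ≤ 1 - 2 * (‖x‖ * ‖v‖ ^ 2 - δ * ‖x‖) + ‖v‖ ^ 2 := by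
      have := (abs_lt.1 hband).1
      have := pow_le_one₀ (norm_nonneg x) hx_le (n := 2)
      linarith
    _ ≤ 1 - 2 * ((1 - δ) * ‖v‖ ^ 2 - δ * 1) + ‖v‖ ^ 2 := by gcongr
    _ ≤ 1 - ‖v‖ ^ 2 + 4 * δ := by nlinarith

/-- The points of the unit ball that are close to its boundary and almost orthogonal to `v`. In
high dimension they carry almost all of the volume of the ball. -/
def equatorialShell (v : E) (η : ℝ) : Set E :=
  {y | ‖y‖ ≤ 1 ∧ 1 - η < ‖y‖ ∧ |⟪y, v⟫| < η}

lemma mem_closedBall_smul_of_le_inner {w y : E} {η : ℝ} (hw : ‖w‖ ≤ 1) (hy : ‖y‖ ≤ 1) (hη : 0 ≤ η)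
    (hyw : η ≤ ⟪y, w⟫) : y ∈ closedBall (η • w) √(1 - η ^ 2) := by
  rw [mem_closedBall, dist_eq_norm]
  refine Real.le_sqrt_of_sq_le ?_
  calc ‖y - η • w‖ ^ 2 = ‖y‖ ^ 2 - 2 * (η * ⟪y, w⟫) + (η * ‖w‖) ^ 2 := by
        rw [norm_sub_sq_real, real_inner_smul_right, norm_smul, Real.norm_of_nonneg hη]
    _ ≤ 1 ^ 2 - 2 * (η * η) + (η * 1) ^ 2 := by gcongr
    _ = 1 - η ^ 2 := by ring

lemma closedBall_subset_equatorialShell_union (hv : ‖v‖ ≤ 1) {η : ℝ} (hη : 0 ≤ η) :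
    closedBall 0 1 ⊆ equatorialShell v η ∪ (closedBall 0 (1 - η) ∪
      (closedBall (η • v) √(1 - η ^ 2) ∪ closedBall (η • -v) √(1 - η ^ 2))) := by
  intro y hy
  rw [mem_closedBall_zero_iff] at hy
  rcases le_or_gt ‖y‖ (1 - η) with hinner | hshell
  · exact .inr (.inl (mem_closedBall_zero_iff.2 hinner))
  rcases lt_or_ge |⟪y, v⟫| η with horth | hcap
  · exact .inl ⟨hy, hshell, horth⟩
  rcases le_abs.1 hcap with hpos | hneg
  · exact .inr (.inr (.inl (mem_closedBall_smul_of_le_inner hv hy hη hpos)))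
  · exact .inr (.inr (.inr (mem_closedBall_smul_of_le_inner (by rwa [norm_neg]) hy hη
      (by rwa [inner_neg_right]))))

lemma abs_sqrt_mul_inner_lt_of_mem_equatorialShell {η : ℝ} {y : E} (hy : y ∈ equatorialShell v η) :
    |√(1 - ‖v‖ ^ 2) * ⟪y, v⟫| < η := by
  rw [abs_mul, abs_of_nonneg (Real.sqrt_nonneg _)]
  exact (mul_le_of_le_one_left (abs_nonneg _) (Real.sqrt_le_one.2 (by simp))).trans_lt hy.2.2

lemma abs_norm_add_smul_sub_one_le_of_mem_equatorialShell (hv : ‖v‖ ≤ 1) {η : ℝ} {y : E}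
    (hy : y ∈ equatorialShell v η) : |‖v + √(1 - ‖v‖ ^ 2) • y‖ - 1| ≤ 4 * η := by
  have horth := abs_sqrt_mul_inner_lt_of_mem_equatorialShell hy
  obtain ⟨hy_le, hy_gt, -⟩ := hy
  have hv2 : ‖v‖ ^ 2 ≤ 1 := pow_le_one₀ (norm_nonneg v) hv
  have hy2 : |1 - ‖y‖ ^ 2| ≤ 2 * η := by
    rw [abs_of_nonneg (sub_nonneg.2 (pow_le_one₀ (norm_nonneg y) hy_le))]
    nlinarith [norm_nonneg y]
  set c := √(1 - ‖v‖ ^ 2)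
  have hc2 : c ^ 2 = 1 - ‖v‖ ^ 2 := Real.sq_sqrt (by linarith)
  have hsq : ‖v + c • y‖ ^ 2 - 1 = 2 * (c * ⟪y, v⟫) - c ^ 2 * (1 - ‖y‖ ^ 2) := by
    rw [norm_add_sq_real, real_inner_smul_right, norm_smul, real_inner_comm,
      Real.norm_of_nonneg (Real.sqrt_nonneg _), mul_pow, hc2]
    ring
  calc |‖v + c • y‖ - 1| ≤ |‖v + c • y‖ - 1| * (‖v + c • y‖ + 1) :=
        le_mul_of_one_le_right (abs_nonneg _) (by simp)
    _ = |‖v + c • y‖ ^ 2 - 1| := by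
      rw [← abs_of_nonneg (by positivity : 0 ≤ ‖v + c • y‖ + 1), ← abs_mul]
      congr 1
      ring
    _ ≤ |2 * (c * ⟪y, v⟫)| + |c ^ 2 * (1 - ‖y‖ ^ 2)| := hsq ▸ abs_sub _ _
    _ = 2 * |c * ⟪y, v⟫| + c ^ 2 * |1 - ‖y‖ ^ 2| := by
      rw [abs_mul 2, abs_two, abs_mul (c ^ 2), abs_sq]
    _ ≤ 2 * η + 1 * (2 * η) := by
      gcongr
      exact hc2.trans_le (by simp)
    _ = 4 * η := by ring

lemma vadd_smul_equatorialShell_subset (hv : ‖v‖ ≤ 1) {η : ℝ} (hη : η ≤ 1 / 8) :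
    v +ᵥ √(1 - ‖v‖ ^ 2) • equatorialShell v η ⊆
      closedBall 0 (1 + 4 * η) ∩ NormedSpace.normalize ⁻¹' unitBand v (10 * η) := by
  rintro _ ⟨_, ⟨y, hy, rfl⟩, rfl⟩
  have hη0 : 0 < η := (abs_nonneg _).trans_lt hy.2.2
  have horth := abs_sqrt_mul_inner_lt_of_mem_equatorialShell hy
  have hnorm := abs_norm_add_smul_sub_one_le_of_mem_equatorialShell hv hy
  change v + √(1 - ‖v‖ ^ 2) • y ∈ _
  set c := √(1 - ‖v‖ ^ 2)
  set x := v + c • y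
  obtain ⟨hx_ge, hx_le⟩ := abs_le.1 hnorm
  have hx_half : 1 / 2 ≤ ‖x‖ := by linarith
  have hx_pos : 0 < ‖x‖ := one_half_pos.trans_le hx_half
  refine ⟨mem_closedBall_zero_iff.2 (by linarith),
    NormedSpace.norm_normalize_eq_one_iff.2 (norm_pos_iff.1 hx_pos), ?_⟩
  rw [inner_normalize_sub_self (norm_pos_iff.1 hx_pos), abs_div, abs_norm, div_lt_iff₀ hx_pos]
  calc |⟪x, v⟫ - ‖x‖ * ‖v‖ ^ 2|
      = |c * ⟪y, v⟫ - (‖x‖ - 1) * ‖v‖ ^ 2| := by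
        rw [inner_add_left, real_inner_smul_left, real_inner_self_eq_norm_sq]
        ring_nf
    _ ≤ |c * ⟪y, v⟫| + |‖x‖ - 1| * ‖v‖ ^ 2 := by
        rw [← abs_of_nonneg (sq_nonneg ‖v‖), ← abs_mul, abs_sq]
        exact abs_sub _ _
    _ < η + 4 * η * 1 :=
        add_lt_add_of_lt_of_le horth (mul_le_mul hnorm (pow_le_one₀ (norm_nonneg v) hv)
          (sq_nonneg _) (by positivity))
    _ = 10 * η * (1 / 2) := by ring
    _ ≤ 10 * η * ‖x‖ := by gcongr

end BandGeometry

lemma measureReal_ball_pos {X : Type*} [PseudoMetricSpace X] [ProperSpace X] [MeasurableSpace X]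
    (μ : Measure X) [μ.IsOpenPosMeasure] [IsFiniteMeasureOnCompacts μ] (x : X) {r : ℝ}
    (hr : 0 < r) : 0 < μ.real (ball x r) :=
  ENNReal.toReal_pos (measure_ball_pos μ x hr).ne' measure_ball_lt_top.ne

section BandVolume

variable {E : Type*} [NormedAddCommGroup E] [InnerProductSpace ℝ E] [FiniteDimensional ℝ E]
  [MeasurableSpace E] [BorelSpace E] (μ : Measure E) [μ.IsAddHaarMeasure] {v : E}

lemma coneMeasure_unitBand_le [Nontrivial E] (hv : ‖v‖ ≤ 1) {δ : ℝ} (hδ0 : 0 < δ) (hδ1 : δ ≤ 1) :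
    (coneMeasure μ).real (unitBand v δ) ≤
      (1 - (1 - δ) ^ finrank ℝ E)⁻¹ * √(1 - ‖v‖ ^ 2 + 4 * δ) ^ finrank ℝ E := by
  have hcover := (measureReal_mono (closedBall_inter_normalize_preimage_unitBand_subset hv δ)
    (measure_union_ne_top (measure_ne_top_of_subset Set.inter_subset_left
      measure_closedBall_lt_top.ne) measure_closedBall_lt_top.ne)).trans
        (measureReal_union_le (μ := μ) _ _)
  simp only [measureReal_closedBall_inter_normalize_preimage μ (measurableSet_unitBand v δ)]
    at hcover
  rw [μ.addHaar_real_closedBall _ zero_le_one, μ.addHaar_real_closedBall _ (sub_nonneg.2 hδ1),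
    μ.addHaar_real_closedBall _ (Real.sqrt_nonneg _), one_pow, one_mul, ← mul_assoc, ← add_mul,
    mul_le_mul_iff_left₀ (measureReal_ball_pos μ 0 one_pos)] at hcover
  have hshell : 0 < 1 - (1 - δ) ^ finrank ℝ E :=
    sub_pos.2 (pow_lt_one₀ (by linarith) (by linarith) finrank_pos.ne')
  rw [inv_mul_eq_div, le_div_iff₀ hshell]
  linarith

lemma le_measureReal_equatorialShell (hv : ‖v‖ ≤ 1) {η : ℝ} (hη0 : 0 ≤ η) (hη1 : η ≤ 1) :
    (1 - (1 - η) ^ finrank ℝ E - 2 * √(1 - η ^ 2) ^ finrank ℝ E) * μ.real (ball 0 1) ≤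
      μ.real (equatorialShell v η) := by
  have hfin : μ (equatorialShell v η) ≠ ∞ := measure_ne_top_of_subset
    (fun y hy ↦ mem_closedBall_zero_iff.2 hy.1) (measure_closedBall_lt_top (x := 0) (r := 1)).ne
  have hcover := calc
    μ.real (closedBall 0 1) ≤ _ :=
      measureReal_mono (closedBall_subset_equatorialShell_union hv hη0) <|
        measure_union_ne_top hfin <| measure_union_ne_top measure_closedBall_lt_top.ne <|
          measure_union_ne_top measure_closedBall_lt_top.ne measure_closedBall_lt_top.ne
    _ ≤ _ := measureReal_union_le _ _
    _ ≤ _ := by grw [measureReal_union_le, measureReal_union_le]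
  simp only [μ.addHaar_real_closedBall _ zero_le_one,
    μ.addHaar_real_closedBall _ (sub_nonneg.2 hη1),
    μ.addHaar_real_closedBall _ (Real.sqrt_nonneg _), one_pow] at hcover
  linarith

lemma le_coneMeasure_unitBand [Nontrivial E] (hv : ‖v‖ ≤ 1) {η : ℝ} (hη0 : 0 ≤ η)
    (hη : η ≤ 1 / 8) :
    (1 - (1 - η) ^ finrank ℝ E - 2 * √(1 - η ^ 2) ^ finrank ℝ E) *
        (√(1 - ‖v‖ ^ 2) / (1 + 4 * η)) ^ finrank ℝ E ≤
      (coneMeasure μ).real (unitBand v (10 * η)) := by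
  have hr : 0 < 1 + 4 * η := by positivity
  have hcover := measureReal_mono (vadd_smul_equatorialShell_subset hv hη)
    (measure_ne_top_of_subset Set.inter_subset_left
      (measure_closedBall_lt_top (μ := μ) (x := 0) (r := 1 + 4 * η)).ne)
  rw [measureReal_closedBall_inter_normalize_preimage μ (measurableSet_unitBand v _),
    μ.addHaar_real_closedBall _ hr.le, measureReal_def, measure_vadd,
    Measure.addHaar_smul_of_nonneg _ (Real.sqrt_nonneg _), ENNReal.toReal_mul,
    ENNReal.toReal_ofReal (by positivity), ← measureReal_def] at hcover
  have hball : 0 < (1 + 4 * η) ^ finrank ℝ E * μ.real (ball 0 1) :=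
    mul_pos (by positivity) (measureReal_ball_pos μ 0 one_pos)
  refine le_of_mul_le_mul_right ?_ hball
  calc _ = √(1 - ‖v‖ ^ 2) ^ finrank ℝ E *
        ((1 - (1 - η) ^ finrank ℝ E - 2 * √(1 - η ^ 2) ^ finrank ℝ E) * μ.real (ball 0 1)) := by
        rw [div_pow]
        field_simp
    _ ≤ √(1 - ‖v‖ ^ 2) ^ finrank ℝ E * μ.real (equatorialShell v η) := by
      gcongr
      exact le_measureReal_equatorialShell μ hv hη0 (by linarith)
    _ ≤ _ := hcover

end BandVolume

section SphereBand

lemma norm_sq_inv_sqrt_smul_toLp {N : ℕ} [NeZero N] {m : Fin N → ℝ} {q : ℝ}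
    (hm : ∑ i, m i ^ 2 = N * q) : ‖(√N)⁻¹ • WithLp.toLp 2 m‖ ^ 2 = q := by
  have hN : (N : ℝ) ≠ 0 := NeZero.ne _
  rw [norm_smul, mul_pow, EuclideanSpace.real_norm_sq_eq, hm, norm_inv,
    Real.norm_of_nonneg (Real.sqrt_nonneg _), inv_pow, Real.sq_sqrt N.cast_nonneg,
    inv_mul_cancel_left₀ hN]

variable {N : ℕ} [NeZero N] {m : Fin N → ℝ} {q : ℝ} (hm : ∑ i, m i ^ 2 = N * q) (hq : q ≤ 1)
include hm hq

lemma measureReal_sphereUniform_band_le {δ : ℝ} (hδ0 : 0 < δ) (hδ1 : δ ≤ 1) :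
    (sphereUniform N).real (band N m δ) ≤ (1 - (1 - δ) ^ N)⁻¹ * √(1 - q + 4 * δ) ^ N := by
  have hnorm := norm_sq_inv_sqrt_smul_toLp hm
  have hle := coneMeasure_unitBand_le volume
    ((sq_le_one_iff₀ (norm_nonneg _)).1 (hnorm.trans_le hq)) hδ0 hδ1
  rwa [← measureReal_sphereUniform_band, hnorm, finrank_euclideanSpace_fin] at hle

lemma le_measureReal_sphereUniform_band {η : ℝ} (hη0 : 0 ≤ η) (hη : η ≤ 1 / 8) :
    (1 - (1 - η) ^ N - 2 * √(1 - η ^ 2) ^ N) * (√(1 - q) / (1 + 4 * η)) ^ N ≤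
      (sphereUniform N).real (band N m (10 * η)) := by
  have hnorm := norm_sq_inv_sqrt_smul_toLp hm
  have hle := le_coneMeasure_unitBand volume
    ((sq_le_one_iff₀ (norm_nonneg _)).1 (hnorm.trans_le hq)) hη0 hη
  rwa [← measureReal_sphereUniform_band, hnorm, finrank_euclideanSpace_fin] at hle

end SphereBand

section ExponentialRate

lemma tendsto_log_mul_pow_div {a : ℕ → ℝ} {l b : ℝ} (ha : Tendsto a atTop (𝓝 l)) (hl : l ≠ 0)
    (hb : b ≠ 0) : Tendsto (fun n ↦ Real.log (a n * b ^ n) / n) atTop (𝓝 (Real.log b)) := by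
  have hlim : Tendsto (fun n : ℕ ↦ Real.log (a n) / n + Real.log b) atTop (𝓝 (Real.log b)) := by
    simpa using ((ha.log hl).div_atTop tendsto_natCast_atTop_atTop).add_const (Real.log b)
  refine hlim.congr' ?_
  filter_upwards [ha.eventually_ne hl, eventually_ne_atTop 0] with n han hn
  rw [Real.log_mul han (pow_ne_zero n hb), Real.log_pow]
  field_simp

lemma log_le_liminf_le_limsup_le_log {p a a' : ℕ → ℝ} {l l' b b' : ℝ}
    (ha : Tendsto a atTop (𝓝 l)) (hl : 0 < l) (hb : 0 < b)
    (ha' : Tendsto a' atTop (𝓝 l')) (hl' : 0 < l') (hb' : 0 < b')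
    (hlow : ∀ᶠ n in atTop, a n * b ^ n ≤ p n) (hupp : ∀ᶠ n in atTop, p n ≤ a' n * b' ^ n) :
    Real.log b ≤ liminf (fun n ↦ Real.log (p n) / n) atTop ∧
      liminf (fun n ↦ Real.log (p n) / n) atTop ≤ limsup (fun n ↦ Real.log (p n) / n) atTop ∧
      limsup (fun n ↦ Real.log (p n) / n) atTop ≤ Real.log b' := by
  have hpos : ∀ᶠ n in atTop, 0 < a n * b ^ n := by
    filter_upwards [ha.eventually_const_lt hl] with n han using mul_pos han (pow_pos hb n)
  have hlow_log : ∀ᶠ n : ℕ in atTop, Real.log (a n * b ^ n) / n ≤ Real.log (p n) / n := by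
    filter_upwards [hlow, hpos] with n hn hn0
    gcongr
  have hupp_log : ∀ᶠ n : ℕ in atTop, Real.log (p n) / n ≤ Real.log (a' n * b' ^ n) / n := by
    filter_upwards [hlow, hupp, hpos] with n hn hn' hn0
    gcongr
    exact hn0.trans_le hn
  have htend := tendsto_log_mul_pow_div ha hl.ne' hb.ne'
  have htend' := tendsto_log_mul_pow_div ha' hl'.ne' hb'.ne'
  have hbdd_below := htend.isBoundedUnder_ge.mono_ge hlow_log
  have hbdd_above := htend'.isBoundedUnder_le.mono_le hupp_log
  refine ⟨?_, liminf_le_limsup hbdd_above hbdd_below, ?_⟩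
  · rw [← htend.liminf_eq]
    exact liminf_le_liminf hlow_log htend.isBoundedUnder_ge hbdd_above.isCoboundedUnder_ge
  · rw [← htend'.limsup_eq]
    exact limsup_le_limsup hupp_log hbdd_below.isCoboundedUnder_le htend'.isBoundedUnder_le

lemma log_le_liminf_le_limsup_le_log_sphereUniform_band {q : ℝ} (hq : q < 1)
    {m : (N : ℕ) → Fin N → ℝ} (hm : ∀ N, 1 ≤ N → ∑ i, m N i ^ 2 = N * q) {δ : ℝ}
    (hδ : δ ∈ Set.Ioo 0 1) :
    Real.log (√(1 - q) / (1 + 4 * (δ / 10))) ≤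
        liminf (fun N : ℕ ↦ Real.log ((sphereUniform N).real (band N (m N) δ)) / N) atTop ∧
      liminf (fun N : ℕ ↦ Real.log ((sphereUniform N).real (band N (m N) δ)) / N) atTop ≤
        limsup (fun N : ℕ ↦ Real.log ((sphereUniform N).real (band N (m N) δ)) / N) atTop ∧
      limsup (fun N : ℕ ↦ Real.log ((sphereUniform N).real (band N (m N) δ)) / N) atTop ≤
        Real.log √(1 - q + 4 * δ) := by
  obtain ⟨hδ0, hδ1⟩ := hδ
  have hpow {r : ℝ} (hr0 : 0 ≤ r) (hr1 : r < 1) : Tendsto (fun N : ℕ ↦ r ^ N) atTop (𝓝 0) :=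
    tendsto_pow_atTop_nhds_zero_of_lt_one hr0 hr1
  have hcap : √(1 - (δ / 10) ^ 2) < 1 := by
    rw [Real.sqrt_lt' one_pos]
    nlinarith
  have hlow : Tendsto (fun N ↦ 1 - (1 - δ / 10) ^ N - 2 * √(1 - (δ / 10) ^ 2) ^ N) atTop (𝓝 1) := by
    simpa using ((hpow (by linarith) (by linarith)).const_sub 1).sub
      ((hpow (Real.sqrt_nonneg _) hcap).const_mul 2)
  have hupp : Tendsto (fun N ↦ (1 - (1 - δ) ^ N)⁻¹) atTop (𝓝 1) := by
    simpa using ((hpow (by linarith) (by linarith)).const_sub 1).inv₀ (by simp)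
  refine log_le_liminf_le_limsup_le_log hlow one_pos (by have := sub_pos.2 hq; positivity) hupp
    one_pos (Real.sqrt_pos.2 (by linarith)) ?_ ?_
  · filter_upwards [eventually_ge_atTop 1] with N hN
    have : NeZero N := ⟨by lia⟩
    have hle := le_measureReal_sphereUniform_band (hm N hN) hq.le (η := δ / 10) (by positivity)
      (by linarith)
    rwa [mul_div_cancel₀ δ (by norm_num : (10 : ℝ) ≠ 0)] at hle
  · filter_upwards [eventually_ge_atTop 1] with N hN
    have : NeZero N := ⟨by lia⟩
    exact measureReal_sphereUniform_band_le (hm N hN) hq.le hδ0 hδ1.le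

end ExponentialRate

/-- the exponential volume of a band of radius `√(Nq)` is `½ log(1-q)`. -/
theorem statement_14 (q : ℝ) (hq : q ∈ Set.Ico (0 : ℝ) 1)
    (m : (N : ℕ) → Fin N → ℝ) (hm : ∀ N, 1 ≤ N → ∑ i, (m N i) ^ 2 = N * q) :
    Tendsto (fun δ : ℝ => Filter.limsup (fun N : ℕ =>
        Real.log ((sphereUniform N (band N (m N) δ)).toReal) / N) atTop)
      (nhdsWithin 0 (Set.Ioi 0)) (nhds (Real.log (1 - q) / 2))
    ∧ Tendsto (fun δ : ℝ => Filter.liminf (fun N : ℕ =>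
        Real.log ((sphereUniform N (band N (m N) δ)).toReal) / N) atTop)
      (nhdsWithin 0 (Set.Ioi 0)) (nhds (Real.log (1 - q) / 2)) := by
  have hpos : 0 < 1 - q := sub_pos.2 hq.2
  have hlow : Tendsto (fun δ ↦ Real.log (√(1 - q) / (1 + 4 * (δ / 10)))) (𝓝[>] 0)
      (𝓝 (Real.log (1 - q) / 2)) := by
    have hcont : ContinuousAt (fun δ ↦ Real.log (√(1 - q) / (1 + 4 * (δ / 10)))) 0 := by
      fun_prop (disch := positivity)
    simpa [Real.log_sqrt hpos.le] using hcont.tendsto.mono_left nhdsWithin_le_nhds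
  have hupp : Tendsto (fun δ ↦ Real.log √(1 - q + 4 * δ)) (𝓝[>] 0)
      (𝓝 (Real.log (1 - q) / 2)) := by
    have hcont : ContinuousAt (fun δ ↦ Real.log √(1 - q + 4 * δ)) 0 := by
      fun_prop (disch := positivity)
    simpa [Real.log_sqrt hpos.le] using hcont.tendsto.mono_left nhdsWithin_le_nhds
  have hrate := (eventually_mem_set.2 (Ioo_mem_nhdsGT (zero_lt_one (α := ℝ)))).mono fun δ hδ ↦
    log_le_liminf_le_limsup_le_log_sphereUniform_band hq.2 hm hδ
  exact ⟨tendsto_of_tendsto_of_tendsto_of_le_of_le' hlow hupp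
      (hrate.mono fun δ h ↦ h.1.trans h.2.1) (hrate.mono fun δ h ↦ h.2.2),
    tendsto_of_tendsto_of_tendsto_of_le_of_le' hlow hupp
      (hrate.mono fun δ h ↦ h.1) (hrate.mono fun δ h ↦ h.2.1.trans h.2.2)⟩
end
end
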